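/- arXiv:1905.06459 — 3 statements merged into one kernel-verified Lean document; each statement's English description precedes it below -/
import Mathlib

section
/- Every covering 3-hypergraph of order at least 7 is eulerian. -/
/-- A closed walk of length `k` in a hypergraph on vertex type `V` whose edges are
finite sets of vertices: an alternating sequence of vertices and edges such that
consecutive vertices are distinct and both lie in the interposed edge, and the
first vertex equals the last. -/
def IsClosedWalk {V : Type} (k : ℕ) (v : Fin (k + 1) → V) (e : Fin k → Finset V) : Prop :=
  v 0 = v (Fin.last k) ∧
    ∀ i : Fin k, v i.castSucc ≠ v i.succ ∧ v i.castSucc ∈ e i ∧ v i.succ ∈ e i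

/-- The multiset of edges traversed by a walk (with multiplicity). -/
def walkEdges {V : Type} {k : ℕ} (e : Fin k → Finset V) : Multiset (Finset V) :=
  Multiset.ofList (List.ofFn e)

/-- A hypergraph, given by its edge multiset `E` over vertex type `V`, is eulerian if it
admits a closed walk whose multiset of traversed edges is exactly `E`, i.e. a closed
strict trail traversing every edge exactly once (a trivial walk works iff `E = 0`,
matching the convention that a trivial walk is an Euler tour of an edgeless
hypergraph). -/
def IsEulerian {V : Type} (E : Multiset (Finset V)) : Prop :=
  ∃ (k : ℕ) (v : Fin (k + 1) → V) (e : Fin k → Finset V),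
    IsClosedWalk k v e ∧ walkEdges e = E

/-- An `l`-covering `k`-hypergraph on vertex type `V`: a nonempty `k`-uniform edge
multiset such that every `l`-element subset of the vertex set is contained in at
least one edge. -/
def IsCoveringHypergraph {V : Type} [DecidableEq V] (E : Multiset (Finset V))
    (l k : ℕ) : Prop :=
  E ≠ 0 ∧ (∀ f ∈ E, f.card = k) ∧
    ∀ s : Finset V, s.card = l → ∃ f ∈ E, s ⊆ f

/-!
Choose in every triple a vertex to be skipped, its token. The two remaining vertices form the link
of the triple, and the links are the edges of a multigraph. An Euler tour of this multigraph is an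
Euler tour of the hypergraph, so it suffices to choose the tokens such that all degrees are even and
all links lie in one component.

Moving the tokens of distinct triples successively along a trail changes the parity of the degree
only at the ends of the trail. Any two vertices are joined by such a trail, unless some triple
cannot be bypassed; then each vertex of this triple has at least as many private neighbours as the
other two together, so there are none, but every vertex outside the triple gives rise to one. Hence
a choice that minimises the number of odd vertices has none.

Among all even choices and all components of their multigraphs take a component `C` with the most
edges. Moving tokens along a closed trail keeps the degrees even, and if it changes at most one edge
of `C`, then it cannot disconnect `C`, as an even multigraph has no bridge; so by maximality `C`
does not gain an edge. This and similar arguments, one of them around a vertex that does not cut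
`C`, exclude many closed trails of length two, three and four. For a vertex `v` outside `C` that
lies in a link, they show that the tokens of all links at `v` are distinct elements of `C`, and that
the tokens of any two of these links form the link of a triple with token outside `C`, which then
lies in every further link at `v`. There are at least four links at `v` by parity, and this is a
contradiction.
-/

namespace CoveringTriples

open Finset

section Trails

variable {V I : Type*} [DecidableEq I]

/-- `Trail R T a b`: there is a walk from `a` to `b` whose steps use each index of `T` exactly once,
where `R i x y` says that a step with index `i` may lead from `x` to `y`. -/
inductive Trail (R : I → V → V → Prop) : Finset I → V → V → Prop
  | nil (a : V) : Trail R ∅ a a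
  | cons {T : Finset I} {i : I} {a b c : V} (hi : i ∉ T) (hstep : R i a b) (htail : Trail R T b c) :
      Trail R (insert i T) a c

namespace Trail

variable {R : I → V → V → Prop} {T T₁ T₂ : Finset I} {i j k : I} {a b c d : V}

lemma single (h : R i a b) : Trail R {i} a b :=
  cons (notMem_empty i) h (nil b)

lemma pair (hij : i ≠ j) (h₁ : R i a b) (h₂ : R j b c) : Trail R {i, j} a c :=
  cons (notMem_singleton.2 hij) h₁ (single h₂)

lemma triple (hij : i ≠ j) (hik : i ≠ k) (hjk : j ≠ k) (h₁ : R i a b) (h₂ : R j b c)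
    (h₃ : R k c d) : Trail R {i, j, k} a d :=
  cons (by simp [hij, hik]) h₁ (pair hjk h₂ h₃)

lemma append (h₁ : Trail R T₁ a b) (h₂ : Trail R T₂ b c) (hT : Disjoint T₁ T₂) :
    Trail R (T₁ ∪ T₂) a c := by
  induction h₁ with
  | nil => rwa [empty_union]
  | cons hi hstep _ ih =>
    rw [disjoint_insert_left] at hT
    rw [insert_union]
    exact cons (by simp [hi, hT.1]) hstep (ih h₂ hT.2)

lemma concat (h : Trail R T a b) (hi : i ∉ T) (hstep : R i b c) : Trail R (insert i T) a c := by
  rw [insert_eq, union_comm]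
  exact h.append (single hstep) (disjoint_singleton_right.2 hi)

lemma symm (hR : ∀ i x y, R i x y → R i y x) (h : Trail R T a b) : Trail R T b a := by
  induction h with
  | nil => exact nil _
  | cons hi hstep _ ih => exact ih.concat hi (hR _ _ _ hstep)

lemma imp {R' : I → V → V → Prop} (h : Trail R T a b) (hR : ∀ i ∈ T, ∀ x y, R i x y → R' i x y) :
    Trail R' T a b := by
  induction h with
  | nil => exact nil _
  | cons hi hstep _ ih =>
    exact cons hi (hR _ (mem_insert_self ..) _ _ hstep)
      (ih fun j hj => hR j (mem_insert_of_mem hj))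

lemma sum_eq_add (h : Trail R T a b) {f : I → ZMod 2} {δ : V → ZMod 2}
    (hf : ∀ i x y, R i x y → f i = δ x + δ y) : ∑ i ∈ T, f i = δ a + δ b := by
  induction h with
  | nil => simp [CharTwo.add_self_eq_zero]
  | @cons T i a b c hi hstep _ ih =>
    rw [sum_insert hi, ih, hf _ _ _ hstep]
    linear_combination CharTwo.add_self_eq_zero (δ b)

end Trail

end Trails

section Multigraph

variable {V I : Type*}

/-- `Respects X s`: the set `X` contains all or none of `s`. -/
def Respects (X s : Finset V) : Prop :=
  ∀ ⦃a⦄, a ∈ s → ∀ ⦃b⦄, b ∈ s → a ∈ X → b ∈ X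

/-- A family `L : I → Finset V` of pairs is viewed as a multigraph on `V`; the set `X` is saturated
if no edge of this multigraph leaves it. -/
def Saturated (L : I → Finset V) (X : Finset V) : Prop :=
  ∀ i, Respects X (L i)

lemma respects_of_mem_iff {X s : Finset V} {a b : V} (hs : #s = 2) (ha : a ∈ s) (hb : b ∈ s)
    (hab : a ≠ b) (h : a ∈ X ↔ b ∈ X) : Respects X s := by
  classical
  obtain ⟨x, y, -, rfl⟩ := card_eq_two.1 hs
  simp only [Respects, mem_insert, mem_singleton] at ha hb ⊢
  grind

section Component

variable [Fintype V] {L : I → Finset V} {X : Finset V} {r x : V}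

open Classical in
/-- The connected component of `r` in the multigraph `L`, as the least saturated set around `r`. -/
noncomputable def component (L : I → Finset V) (r : V) : Finset V :=
  {x | ∀ X, Saturated L X → r ∈ X → x ∈ X}

lemma mem_component : x ∈ component L r ↔ ∀ X, Saturated L X → r ∈ X → x ∈ X := by
  simp [component]

lemma mem_component_self (L : I → Finset V) (r : V) : r ∈ component L r :=
  mem_component.2 fun _ _ hr => hr

lemma component_subset (hX : Saturated L X) (hr : r ∈ X) : component L r ⊆ X :=
  fun _ hx => mem_component.1 hx X hX hr

lemma saturated_component (L : I → Finset V) (r : V) : Saturated L (component L r) :=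
  fun i _ ha _ hb h => mem_component.2 fun X hX hr => hX i ha hb (mem_component.1 h X hX hr)

lemma mem_component_of_mem {i : I} {a b : V} (ha : a ∈ L i) (hb : b ∈ L i)
    (h : a ∈ component L r) : b ∈ component L r :=
  saturated_component L r i ha hb h

lemma component_subset_of_mem (hX : Saturated L X) (hx : x ∈ component L r) (hxX : x ∈ X) :
    component L r ⊆ X := by
  classical
  by_contra hsub
  have hr : r ∉ X := fun hr => hsub (component_subset hX hr)
  have hdiff : Saturated L (component L r \ X) := fun i a ha b hb hab => by
    rw [mem_sdiff] at hab ⊢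
    exact ⟨mem_component_of_mem ha hb hab.1, fun hbX => hab.2 (hX i hb ha hbX)⟩
  have hxd := component_subset hdiff (mem_sdiff.2 ⟨mem_component_self L r, hr⟩) hx
  exact (mem_sdiff.1 hxd).2 hxX

end Component

section Degree

variable [Fintype I] [DecidableEq V] {L : I → Finset V} {X : Finset V} {i : I}

/-- The number of members of the family `L` containing `v`. -/
def degree (L : I → Finset V) (v : V) : ℕ := #{i | v ∈ L i}

/-- All degrees of the multigraph `L` are even. -/
def IsEven (L : I → Finset V) : Prop := ∀ v, Even (degree L v)

lemma natCast_degree (L : I → Finset V) (v : V) :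
    (degree L v : ZMod 2) = ∑ i, if v ∈ L i then 1 else 0 := by
  simp [degree]

lemma sum_degree (L : I → Finset V) (X : Finset V) :
    ∑ v ∈ X, degree L v = ∑ i, #{v ∈ X | v ∈ L i} :=
  sum_card_bipartiteAbove_eq_sum_card_bipartiteBelow fun v i => v ∈ L i

lemma even_card_odd_degree [Fintype V] (hL : ∀ i, #(L i) = 2) : Even #{v | Odd (degree L v)} := by
  rw [← Nat.not_odd_iff_even, ← odd_sum_iff_odd_card_odd, sum_degree]
  simp [hL]

lemma IsEven.exists_notMem (heven : IsEven L) {v : V} {T : Finset I} (hT : ∀ i ∈ T, v ∈ L i)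
    (hodd : Odd #T) : ∃ j ∉ T, v ∈ L j := by
  by_contra! hno
  have hdegree : degree L v = #T :=
    congrArg card (ext fun i => ⟨fun hi => not_imp_comm.1 (hno i) (by simpa using hi),
      fun hi => by simpa using hT i hi⟩)
  exact Nat.not_even_iff_odd.2 hodd (hdegree ▸ heven v)

lemma respects_iff_even_card {s : Finset V} (hs : #s = 2) :
    Respects X s ↔ Even #{v ∈ X | v ∈ s} := by
  obtain ⟨a, b, hab, rfl⟩ := card_eq_two.1 hs
  by_cases ha : a ∈ X <;> by_cases hb : b ∈ X <;>
    simp [Respects, filter_or, filter_eq', ha, hb, hab]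

lemma saturated_of_respects_of_ne (hL : ∀ i, #(L i) = 2) (heven : IsEven L)
    (h : ∀ j ≠ i, Respects X (L j)) : Saturated L X := by
  classical
  intro j
  rcases eq_or_ne j i with rfl | hji
  · have hsum : Even (∑ k, #{v ∈ X | v ∈ L k}) := sum_degree L X ▸ even_sum _ fun v _ => heven v
    rw [← add_sum_erase _ _ (mem_univ j)] at hsum
    have hrest : Even (∑ k ∈ univ.erase j, #{v ∈ X | v ∈ L k}) :=
      even_sum _ fun k hk => (respects_iff_even_card (hL k)).1 (h k (ne_of_mem_erase hk))
    exact (respects_iff_even_card (hL j)).2 ((Nat.even_add.1 hsum).2 hrest)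
  · exact h j hji

end Degree

section NonCutVertex

variable [DecidableEq V] {L : I → Finset V} {r u x y : V}

/-- The multigraph `L` with all edges at `u` emptied. -/
def deleteVertex (L : I → Finset V) (u : V) (i : I) : Finset V := if u ∈ L i then ∅ else L i

lemma saturated_deleteVertex {X : Finset V} :
    Saturated (deleteVertex L u) X ↔ ∀ i, u ∉ L i → Respects X (L i) := by
  refine forall_congr' fun i => ?_
  by_cases hu : u ∈ L i <;> simp [deleteVertex, Respects, hu]

variable [Fintype V]

lemma notMem_component_deleteVertex (hxu : x ≠ u) : u ∉ component (deleteVertex L u) x := by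
  have hsat : Saturated (deleteVertex L u) {u}ᶜ :=
    saturated_deleteVertex.2 fun i hu a _ b hb _ => by
      simpa using fun hbu : b = u => hu (hbu ▸ hb)
  exact fun hu => by simpa using component_subset hsat (by simpa using hxu) hu

lemma exists_edge_to_deleted (hx : x ∈ component L r) (hy : y ∈ component L r)
    (hyK : y ∉ component (deleteVertex L u) x) :
    ∃ i, u ∈ L i ∧ ∃ a ∈ L i, a ∈ component (deleteVertex L u) x := by
  by_contra! hno
  have hsat : Saturated L (component (deleteVertex L u) x) := fun i a ha b hb haK => by
    have hu : u ∉ L i := fun hu => hno i hu a ha haK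
    exact saturated_deleteVertex.1 (saturated_component _ x) i hu ha hb haK
  exact hyK (component_subset_of_mem hsat hx (mem_component_self _ x) hy)

lemma component_deleteVertex_ssubset (hL : ∀ i, #(L i) = 2) (hx : x ∈ component L r)
    (hy : y ∈ component L r) (hxu : x ≠ u) (hyu : y ≠ u)
    (hyK : y ∉ component (deleteVertex L u) x) :
    component (deleteVertex L u) x ⊂ component (deleteVertex L y) x := by
  set K := component (deleteVertex L u) x
  set K' := component (deleteVertex L y) x
  have hK : ∀ i, u ∉ L i → Respects K (L i) :=
    saturated_deleteVertex.1 (saturated_component _ x)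
  have hK' : ∀ i, y ∉ L i → Respects K' (L i) :=
    saturated_deleteVertex.1 (saturated_component _ x)
  have hinter : Saturated (deleteVertex L u) (K ∩ K') :=
    saturated_deleteVertex.2 fun i hu a ha b hb hab => by
      rw [mem_inter] at hab ⊢
      have hy : y ∉ L i := fun hy => hyK (hK i hu ha hy hab.1)
      exact ⟨hK i hu ha hb hab.1, hK' i hy ha hb hab.2⟩
  have hsub : K ⊆ K' := (component_subset hinter <| mem_inter.2
    ⟨mem_component_self _ x, mem_component_self _ x⟩).trans inter_subset_right
  have huK : u ∉ K := notMem_component_deleteVertex hxu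
  obtain ⟨i, hui, a, hai, haK⟩ := exists_edge_to_deleted hx hy hyK
  have hyi : y ∉ L i := fun hyi => (hL i).not_gt <| two_lt_card.2
    ⟨u, hui, a, hai, y, hyi, fun h => huK (h ▸ haK), hyu.symm, fun h => hyK (h ▸ haK)⟩
  exact ssubset_of_subset_not_subset hsub fun h => huK (h (hK' i hyi hai hui (hsub haK)))

-- Take `u` and `x` such that the component of `x` avoiding `u` is largest: a vertex `y` outside
-- it would be a better choice than `u`.
lemma exists_nonCutVertex (hL : ∀ i, #(L i) = 2) (r : V) :
    ∃ u ∈ component L r, ∃ x, (component L r).erase u ⊆ component (deleteVertex L u) x := by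
  rcases (component L r).offDiag.eq_empty_or_nonempty with hempty | hne
  · refine ⟨r, mem_component_self L r, r, fun y hy => ?_⟩
    rw [mem_erase] at hy
    have hmem : (y, r) ∈ (component L r).offDiag :=
      mem_offDiag.2 ⟨hy.2, mem_component_self L r, hy.1⟩
    exact absurd hmem (hempty ▸ notMem_empty _)
  · obtain ⟨⟨u, x⟩, hux, hmax⟩ :=
      exists_max_image _ (fun p => #(component (deleteVertex L p.1) p.2)) hne
    rw [mem_offDiag] at hux
    obtain ⟨hu, hx, hxu⟩ := hux
    refine ⟨u, hu, x, fun y hy => ?_⟩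
    rw [mem_erase] at hy
    by_contra hyK
    have hyx : y ≠ x := by
      rintro rfl
      exact hyK (mem_component_self _ y)
    have hle := hmax (y, x) (mem_offDiag.2 ⟨hy.2, hx, hyx⟩)
    have hlt := card_lt_card (component_deleteVertex_ssubset hL hx hy.2 hxu.symm hy.1 hyK)
    exact hle.not_gt hlt

end NonCutVertex

section EulerTrail

variable {L : I → Finset V} {T : Finset I} {i : I} {a b x y : V}

/-- `Connects L i x y`: the edge `i` of the multigraph `L` can be traversed from `x` to `y`. -/
def Connects (L : I → Finset V) (i : I) (x y : V) : Prop := x ≠ y ∧ x ∈ L i ∧ y ∈ L i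

lemma exists_connects (hL : #(L i) = 2) (hx : x ∈ L i) : ∃ y, Connects L i x y := by
  obtain ⟨y, hy, hyx⟩ := exists_mem_ne (hL ▸ one_lt_two) x
  exact ⟨y, hyx.symm, hx, hy⟩

lemma Connects.eq_or_eq (hL : #(L i) = 2) (h : Connects L i x y) {z : V} (hz : z ∈ L i) :
    z = x ∨ z = y := by
  by_contra! hne
  exact hL.not_gt (two_lt_card.2 ⟨x, h.2.1, y, h.2.2, z, hz, h.1, hne.1.symm, hne.2.symm⟩)

variable [DecidableEq I]

lemma Trail.exists_split (hL : ∀ i, #(L i) = 2) (h : Trail (Connects L) T a b) (hi : i ∈ T)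
    (hx : x ∈ L i) : ∃ T₁ T₂, Disjoint T₁ T₂ ∧ T₁ ∪ T₂ = T ∧
      Trail (Connects L) T₁ a x ∧ Trail (Connects L) T₂ x b := by
  induction h with
  | nil => simp at hi
  | @cons T j a c b hj hstep htail ih =>
    by_cases hij : i = j
    · subst hij
      rcases hstep.eq_or_eq (hL i) hx with rfl | rfl
      · exact ⟨∅, _, disjoint_empty_left _, empty_union _, .nil x, .cons hj hstep htail⟩
      · exact ⟨{i}, T, disjoint_singleton_left.2 hj, rfl, .single hstep, htail⟩
    · obtain ⟨T₁, T₂, hdisj, rfl, h₁, h₂⟩ := ih (mem_of_mem_insert_of_ne hi hij)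
      rw [mem_union, not_or] at hj
      exact ⟨insert j T₁, T₂, disjoint_insert_left.2 ⟨hj.2, hdisj⟩, insert_union ..,
        .cons hj.1 hstep h₁, h₂⟩

lemma Trail.rotate (hL : ∀ i, #(L i) = 2) (h : Trail (Connects L) T a a) (hi : i ∈ T)
    (hx : x ∈ L i) : Trail (Connects L) T x x := by
  obtain ⟨T₁, T₂, hdisj, rfl, h₁, h₂⟩ := h.exists_split hL hi hx
  exact union_comm T₁ T₂ ▸ h₂.append h₁ hdisj.symm

/-- `T` is the index set of a longest trail in the multigraph `L`. -/
def IsLongest (L : I → Finset V) (T : Finset I) : Prop :=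
  ∀ T' a b, Trail (Connects L) T' a b → #T' ≤ #T

lemma IsLongest.mem (hL : ∀ i, #(L i) = 2) (hT : IsLongest L T) (h : Trail (Connects L) T a b)
    (hi : b ∈ L i) : i ∈ T := by
  by_contra hiT
  obtain ⟨c, hc⟩ := exists_connects (hL i) hi
  have hle := hT _ _ _ (h.concat hiT hc)
  simp [card_insert_of_notMem hiT] at hle

variable [Fintype I] [DecidableEq V]

lemma IsLongest.eq_of_isEven (hL : ∀ i, #(L i) = 2) (heven : IsEven L) (hT : IsLongest L T)
    (h : Trail (Connects L) T a b) : a = b := by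
  have hdegree : ∑ i ∈ T, (if b ∈ L i then 1 else 0 : ZMod 2) = 0 := by
    rw [sum_subset (subset_univ T) fun i _ hi => if_neg fun hb => hi (hT.mem hL h hb),
      ← natCast_degree, ZMod.natCast_eq_zero_iff_even]
    exact heven b
  have hends := h.sum_eq_add (f := fun i => if b ∈ L i then 1 else 0)
    (δ := fun x => if b = x then 1 else 0) fun i x y hxy => by
      have : b ∈ L i ↔ b = x ∨ b = y :=
        ⟨hxy.eq_or_eq (hL i), by rintro (rfl | rfl); exacts [hxy.2.1, hxy.2.2]⟩
      by_cases hbx : b = x <;> by_cases hby : b = y <;> simp_all [Connects]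
  by_contra hab
  simp [hdegree, Ne.symm hab] at hends

theorem exists_eulerTrail [Fintype V] (hL : ∀ i, #(L i) = 2) (heven : IsEven L) {r : V}
    (hconn : ∀ i, ∃ x ∈ L i, x ∈ component L r) : ∃ a, Trail (Connects L) univ a a := by
  classical
  obtain ⟨T, hTmem, hTmax⟩ := exists_max_image {T | ∃ a b, Trail (Connects L) T a b} card
    ⟨∅, by simpa using ⟨r, r, .nil r⟩⟩
  have hT : IsLongest L T := fun T' a b h => hTmax T' (by simpa using ⟨a, b, h⟩)
  obtain ⟨a, b, h⟩ := (mem_filter_univ T).1 hTmem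
  obtain rfl : a = b := hT.eq_of_isEven hL heven h
  obtain ⟨x, hxr, hx⟩ : ∃ x ∈ component L r, Trail (Connects L) T x x := by
    rcases T.eq_empty_or_nonempty with rfl | ⟨j, hj⟩
    · exact ⟨r, mem_component_self L r, .nil r⟩
    · obtain ⟨x, hx, hxr⟩ := hconn j
      exact ⟨x, hxr, h.rotate hL hj hx⟩
  have hsat : Saturated L ({x | Trail (Connects L) T x x} : Finset V) := fun i x hx y hy hxT => by
    rw [mem_filter_univ] at hxT ⊢
    exact hxT.rotate hL (hT.mem hL hxT hx) hy
  have hcomp := component_subset_of_mem hsat hxr ((mem_filter_univ x).2 hx)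
  suffices hTuniv : T = univ from ⟨a, hTuniv ▸ h⟩
  refine eq_univ_of_forall fun i => ?_
  obtain ⟨y, hyi, hyr⟩ := hconn i
  have hy : Trail (Connects L) T y y := by simpa using hcomp hyr
  exact hT.mem hL hy hyi

end EulerTrail

end Multigraph

section Tokens

variable {V I : Type*}

/-- A family of triples such that any two vertices lie in a common triple. -/
structure IsTripleCover (edge : I → Finset V) : Prop where
  card_edge : ∀ i, #(edge i) = 3
  exists_edge : ∀ ⦃x y⦄, x ≠ y → ∃ i, x ∈ edge i ∧ y ∈ edge i

/-- A choice of a vertex `t i`, the token, in every edge `i`. An Euler tour determines one: the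
token of an edge is the vertex that is skipped when the edge is traversed. -/
def IsTokenChoice (edge : I → Finset V) (t : I → V) : Prop := ∀ i, t i ∈ edge i

/-- The token of the edge `i` moves from one of the vertices `a`, `b` to the other when the token
choice `t` is replaced by `t'`. -/
def Flips (t t' : I → V) (i : I) (a b : V) : Prop := t i = a ∧ t' i = b ∨ t i = b ∧ t' i = a

lemma IsTokenChoice.update [DecidableEq I] {edge : I → Finset V} {t : I → V} {i : I} {x : V}
    (ht : IsTokenChoice edge t) (hx : x ∈ edge i) :
    IsTokenChoice edge (Function.update t i x) := fun j => by
  rcases eq_or_ne j i with rfl | hji <;> simp [*, ht j]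

variable [DecidableEq V] {edge : I → Finset V} {t t' : I → V} {i j k l : I} {a b c d w x y z : V}

/-- The vertices of the edge `i` other than its token. -/
def link (edge : I → Finset V) (t : I → V) (i : I) : Finset V := (edge i).erase (t i)

/-- The token of the edge `i` is one of `a`, `b` and can be moved to the other one. -/
def Swaps (edge : I → Finset V) (t : I → V) (i : I) (a b : V) : Prop :=
  a ∈ link edge t i ∧ t i = b ∨ b ∈ link edge t i ∧ t i = a

lemma mem_link : x ∈ link edge t i ↔ x ≠ t i ∧ x ∈ edge i := mem_erase

lemma mem_link_of_ne (hx : x ∈ link edge t i) (hne : x ≠ t' i) : x ∈ link edge t' i :=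
  mem_link.2 ⟨hne, (mem_link.1 hx).2⟩

lemma token_mem_link (ht : IsTokenChoice edge t) (hne : t i ≠ t' i) : t i ∈ link edge t' i :=
  mem_link.2 ⟨hne, ht i⟩

lemma link_congr (h : t' i = t i) : link edge t' i = link edge t i := by
  rw [link, link, h]

lemma card_link (hcard : ∀ i, #(edge i) = 3) (ht : IsTokenChoice edge t) (i : I) :
    #(link edge t i) = 2 := by
  rw [link, card_erase_of_mem (ht i), hcard]

lemma Swaps.symm (h : Swaps edge t i a b) : Swaps edge t i b a := Or.symm h

lemma Swaps.mem_left (ht : IsTokenChoice edge t) (h : Swaps edge t i a b) : a ∈ edge i := by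
  rcases h with h | h
  exacts [(mem_link.1 h.1).2, h.2 ▸ ht i]

lemma Swaps.mem_right (ht : IsTokenChoice edge t) (h : Swaps edge t i a b) : b ∈ edge i :=
  h.symm.mem_left ht

lemma Swaps.exists_flip (h : Swaps edge t i a b) :
    ∃ s ∈ edge i, s ≠ t i ∧ (t i = a ∧ s = b ∨ t i = b ∧ s = a) := by
  rcases h with ⟨ha, hb⟩ | ⟨hb, ha⟩
  · exact ⟨a, (mem_link.1 ha).2, (mem_link.1 ha).1, .inr ⟨hb, rfl⟩⟩
  · exact ⟨b, (mem_link.1 hb).2, (mem_link.1 hb).1, .inl ⟨ha, rfl⟩⟩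

lemma swaps_or_mem_link (hxy : x ≠ y) (hx : x ∈ edge i) (hy : y ∈ edge i) :
    Swaps edge t i x y ∨ x ∈ link edge t i ∧ y ∈ link edge t i := by
  simp only [Swaps, mem_link]
  grind

lemma natCast_degree_link [Fintype I] (ht : IsTokenChoice edge t) (v : V) :
    (degree (link edge t) v : ZMod 2) = degree edge v + ∑ i, if v = t i then 1 else 0 := by
  rw [natCast_degree, natCast_degree, ← sum_add_distrib]
  refine sum_congr rfl fun i _ => ?_
  by_cases hv : v = t i
  · simp [hv, mem_link, ht i, CharTwo.add_self_eq_zero]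
  · simp [hv, mem_link]

section Flipping

variable [DecidableEq I] {T : Finset I}

lemma exists_flips (ht : IsTokenChoice edge t) (h : Trail (Swaps edge t) T a b) :
    ∃ t', IsTokenChoice edge t' ∧ (∀ i ∉ T, t' i = t i) ∧ (∀ i ∈ T, t' i ≠ t i) ∧
      Trail (Flips t t') T a b := by
  induction h with
  | nil => exact ⟨t, ht, fun _ _ => rfl, by simp, .nil _⟩
  | @cons T i a b c hi hstep _ ih =>
    obtain ⟨t', ht', hoff, hon, htrail⟩ := ih
    obtain ⟨s, hs, hst, hflip⟩ := hstep.exists_flip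
    have hne : ∀ j ∈ T, j ≠ i := fun j hj hji => hi (hji ▸ hj)
    refine ⟨Function.update t' i s, ht'.update hs, fun j hj => ?_, fun j hj => ?_,
      .cons (b := b) hi ?_ ?_⟩
    · rw [mem_insert, not_or] at hj
      simp [hj.1, hoff j hj.2]
    · rcases mem_insert.1 hj with rfl | hj
      · simpa using hst
      · simpa [hne j hj] using hon j hj
    · simpa [Flips] using hflip
    · exact htrail.imp fun j hj x y => by simp [Flips, hne j hj]

variable [Fintype I]

lemma natCast_degree_link_of_flips (ht : IsTokenChoice edge t) (ht' : IsTokenChoice edge t')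
    (hoff : ∀ i ∉ T, t' i = t i) (h : Trail (Flips t t') T a b) (v : V) :
    (degree (link edge t') v : ZMod 2) =
      degree (link edge t) v + ((if v = a then 1 else 0) + if v = b then 1 else 0) := by
  have hsum := h.sum_eq_add
    (f := fun i => (if v = t i then 1 else 0) + if v = t' i then 1 else 0)
    (δ := fun x => if v = x then 1 else 0) fun i x y => by
      rintro (⟨rfl, rfl⟩ | ⟨rfl, rfl⟩)
      exacts [rfl, add_comm _ _]
  rw [sum_subset (subset_univ T) fun i _ hi => by rw [hoff i hi, CharTwo.add_self_eq_zero],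
    sum_add_distrib] at hsum
  rw [natCast_degree_link ht, natCast_degree_link ht', ← hsum]
  linear_combination -CharTwo.add_self_eq_zero (∑ i, if v = t i then 1 else 0 : ZMod 2)

lemma isEven_link_of_flips (ht : IsTokenChoice edge t) (ht' : IsTokenChoice edge t')
    (hoff : ∀ i ∉ T, t' i = t i) (h : Trail (Flips t t') T a a) (heven : IsEven (link edge t)) :
    IsEven (link edge t') := fun v => by
  rw [← ZMod.natCast_eq_zero_iff_even, natCast_degree_link_of_flips ht ht' hoff h v,
    CharTwo.add_self_eq_zero, add_zero, ZMod.natCast_eq_zero_iff_even]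
  exact heven v

end Flipping

lemma exists_isEven_link_of_triple [Fintype I] (ht : IsTokenChoice edge t)
    (heven : IsEven (link edge t)) (hij : i ≠ j) (hik : i ≠ k) (hjk : j ≠ k)
    (hx : x ∈ edge i) (hy : y ∈ edge j) (hz : z ∈ edge k)
    (hi : t i = a ∧ x = b ∨ t i = b ∧ x = a) (hj : t j = b ∧ y = c ∨ t j = c ∧ y = b)
    (hk : t k = c ∧ z = a ∨ t k = a ∧ z = c) :
    ∃ t', IsTokenChoice edge t' ∧ IsEven (link edge t') ∧ t' i = x ∧ t' j = y ∧ t' k = z ∧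
      ∀ l, l = i ∨ l = j ∨ l = k ∨ t' l = t l := by
  classical
  set t' := Function.update (Function.update (Function.update t i x) j y) k z
  have hi' : t' i = x := by simp [t', hij, hik]
  have hj' : t' j = y := by simp [t', hjk]
  have hk' : t' k = z := by simp [t']
  have hoff : ∀ l, l = i ∨ l = j ∨ l = k ∨ t' l = t l := fun l => by grind
  have ht' : IsTokenChoice edge t' := ((ht.update hx).update hy).update hz
  have hflips : Trail (Flips t t') {i, j, k} a a :=
    .triple hij hik hjk (by rwa [Flips, hi']) (by rwa [Flips, hj']) (by rwa [Flips, hk'])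
  exact ⟨t', ht', isEven_link_of_flips ht ht' (by grind) hflips heven,
    hi', hj', hk', hoff⟩

lemma exists_isEven_link_of_quadruple [Fintype I] (ht : IsTokenChoice edge t)
    (heven : IsEven (link edge t)) (hij : i ≠ j) (hik : i ≠ k) (hil : i ≠ l) (hjk : j ≠ k)
    (hjl : j ≠ l) (hkl : k ≠ l) (hx : x ∈ edge i) (hy : y ∈ edge j) (hz : z ∈ edge k)
    (hw : w ∈ edge l) (hi : t i = a ∧ x = b ∨ t i = b ∧ x = a)
    (hj : t j = b ∧ y = c ∨ t j = c ∧ y = b) (hk : t k = c ∧ z = d ∨ t k = d ∧ z = c)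
    (hl : t l = d ∧ w = a ∨ t l = a ∧ w = d) :
    ∃ t', IsTokenChoice edge t' ∧ IsEven (link edge t') ∧ t' i = x ∧ t' j = y ∧ t' k = z ∧
      t' l = w ∧ ∀ m, m = i ∨ m = j ∨ m = k ∨ m = l ∨ t' m = t m := by
  classical
  set t' := Function.update (Function.update (Function.update (Function.update t i x) j y) k z) l w
  have hi' : t' i = x := by simp [t', hij, hik, hil]
  have hj' : t' j = y := by simp [t', hjk, hjl]
  have hk' : t' k = z := by simp [t', hkl]
  have hl' : t' l = w := by simp [t']
  have hoff : ∀ m, m = i ∨ m = j ∨ m = k ∨ m = l ∨ t' m = t m := fun m => by grind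
  have ht' : IsTokenChoice edge t' := (((ht.update hx).update hy).update hz).update hw
  have hflips : Trail (Flips t t') {i, j, k, l} a a :=
    .cons (by simp [hij, hik, hil]) (by rwa [Flips, hi']) (.triple hjk hjl hkl (by rwa [Flips, hj'])
      (by rwa [Flips, hk']) (by rwa [Flips, hl']))
  exact ⟨t', ht', isEven_link_of_flips ht ht' (by grind) hflips heven, hi', hj', hk', hl', hoff⟩

section Bypass

variable {e₀ : I} {p q r : V}

/-- Every sequence of token moves, one per edge, that leads from one vertex of `e₀` to another
makes use of `e₀` itself. -/
def HasNoBypass [DecidableEq I] (edge : I → Finset V) (t : I → V) (e₀ : I) : Prop :=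
  ∀ T a b, Trail (Swaps edge t) T a b → a ∈ edge e₀ → b ∈ edge e₀ → a ≠ b → e₀ ∈ T

lemma HasNoBypass.eq_of_swaps_of_swaps [DecidableEq I] (h : HasNoBypass edge t e₀)
    (hp : p ∈ edge e₀) (hq : q ∈ edge e₀) (hpq : p ≠ q) (hi : i ≠ e₀) (hj : j ≠ e₀)
    (hpi : Swaps edge t i p x) (hqj : Swaps edge t j q x) : i = j := by
  by_contra hij
  simpa [hi.symm, hj.symm] using h _ _ _ (.pair hij hpi hqj.symm) hp hq hpq

variable [Fintype V]

open Classical in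
/-- The vertices outside `e₀` to which a token of another edge can be moved from `p`, or from which
it can be moved to `p`. -/
noncomputable def outerNeighbors (edge : I → Finset V) (t : I → V) (e₀ : I) (p : V) : Finset V :=
  {x | x ∉ edge e₀ ∧ ∃ g ≠ e₀, Swaps edge t g p x}

open Classical in
/-- The outer neighbours of `p` that are outer neighbours of no other vertex of `e₀`. -/
noncomputable def privateNeighbors (edge : I → Finset V) (t : I → V) (e₀ : I) (p : V) : Finset V :=
  {x ∈ outerNeighbors edge t e₀ p | ∀ q ∈ edge e₀, q ≠ p → x ∉ outerNeighbors edge t e₀ q}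

lemma mem_outerNeighbors :
    x ∈ outerNeighbors edge t e₀ p ↔ x ∉ edge e₀ ∧ ∃ g ≠ e₀, Swaps edge t g p x := by
  simp [outerNeighbors]

lemma mem_privateNeighbors : x ∈ privateNeighbors edge t e₀ p ↔
    x ∈ outerNeighbors edge t e₀ p ∧ ∀ q ∈ edge e₀, q ≠ p → x ∉ outerNeighbors edge t e₀ q := by
  simp [privateNeighbors]

lemma disjoint_privateNeighbors (hp : p ∈ edge e₀) (hpq : p ≠ q) :
    Disjoint (privateNeighbors edge t e₀ p) (privateNeighbors edge t e₀ q) :=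
  disjoint_left.2 fun _ hxp hxq =>
    (mem_privateNeighbors.1 hxq).2 p hp hpq (mem_privateNeighbors.1 hxp).1

variable [DecidableEq I]

namespace HasNoBypass

lemma exists_privateNeighbor (h : HasNoBypass edge t e₀) (hcover : IsTripleCover edge)
    (ht : IsTokenChoice edge t) (hp : p ∈ edge e₀) (hx : x ∉ edge e₀)
    (hxp : x ∉ outerNeighbors edge t e₀ p) :
    ∃ g ≠ e₀, p ∈ link edge t g ∧ x ∈ link edge t g ∧ t g ∈ privateNeighbors edge t e₀ p := by
  obtain ⟨g, hpg, hxg⟩ := hcover.exists_edge (ne_of_mem_of_not_mem hp hx)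
  have hge : g ≠ e₀ := fun hge => hx (hge ▸ hxg)
  obtain ⟨hpL, hxL⟩ := (swaps_or_mem_link (ne_of_mem_of_not_mem hp hx) hpg hxg).resolve_left
    fun hswap => hxp (mem_outerNeighbors.2 ⟨hx, g, hge, hswap⟩)
  have hswap : Swaps edge t g p (t g) := .inl ⟨hpL, rfl⟩
  have htg : t g ∉ edge e₀ := fun htg =>
    hge.symm (by simpa using h _ _ _ (.single hswap) hp htg (mem_link.1 hpL).1)
  refine ⟨g, hge, hpL, hxL, mem_privateNeighbors.2
    ⟨mem_outerNeighbors.2 ⟨htg, g, hge, hswap⟩, fun q hq hqp hqN => ?_⟩⟩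
  obtain ⟨-, k, hk, hkswap⟩ := mem_outerNeighbors.1 hqN
  obtain rfl := h.eq_of_swaps_of_swaps hp hq hqp.symm hge hk hswap hkswap
  have hqL : q ∈ link edge t g :=
    mem_link.2 ⟨ne_of_mem_of_not_mem hq htg, hkswap.mem_left ht⟩
  exact (card_link hcover.card_edge ht g).not_gt (two_lt_card.2 ⟨p, hpL, q, hqL, x, hxL,
    hqp.symm, ne_of_mem_of_not_mem hp hx, ne_of_mem_of_not_mem hq hx⟩)

lemma eq_of_token_eq (h : HasNoBypass edge t e₀) (hcard : ∀ i, #(edge i) = 3)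
    (ht : IsTokenChoice edge t) (hp : p ∈ edge e₀) (hq : q ∈ edge e₀) (hpq : p ≠ q)
    (hx : x ∈ outerNeighbors edge t e₀ q) (hy : y ∉ edge e₀) (hi : i ≠ e₀) (hj : j ≠ e₀)
    (hpi : p ∈ link edge t i) (hxi : x ∈ link edge t i) (hpj : p ∈ link edge t j)
    (hyj : y ∈ link edge t j) (hij : t i = t j) (hti : t i ∉ edge e₀) : x = y := by
  by_contra hxy
  obtain ⟨hx, k, hk, hqx⟩ := mem_outerNeighbors.1 hx
  have hlink : ∀ g z, z ∉ edge e₀ → p ∈ link edge t g → z ∈ link edge t g → t g ∉ edge e₀ →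
      q ∉ edge g := fun g z hz hpg hzg htg hqg =>
    (card_link hcard ht g).not_gt <| two_lt_card.2 ⟨p, hpg, q,
      mem_link.2 ⟨ne_of_mem_of_not_mem hq htg, hqg⟩, z, hzg, hpq,
      ne_of_mem_of_not_mem hp hz, ne_of_mem_of_not_mem hq hz⟩
  have hki : k ≠ i := by
    rintro rfl
    exact hlink k x hx hpi hxi hti (hqx.mem_left ht)
  have hkj : k ≠ j := by
    rintro rfl
    exact hlink k y hy hpj hyj (hij ▸ hti) (hqx.mem_left ht)
  have hne : i ≠ j := by
    rintro rfl
    exact (card_link hcard ht i).not_gt <| two_lt_card.2 ⟨p, hpi, x, hxi, y, hyj,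
      ne_of_mem_of_not_mem hp hx, ne_of_mem_of_not_mem hp hy, hxy⟩
  have htrail : Trail (Swaps edge t) {k, i, j} q p :=
    .triple hki hkj hne hqx (.inl ⟨hxi, rfl⟩) (.inr ⟨hpj, hij.symm⟩)
  simpa [hk.symm, hi.symm, hj.symm] using h _ _ _ htrail hq hp hpq.symm

lemma card_privateNeighbors_add_le (h : HasNoBypass edge t e₀) (hcover : IsTripleCover edge)
    (ht : IsTokenChoice edge t) (hp : p ∈ edge e₀) (hq : q ∈ edge e₀) (hr : r ∈ edge e₀)
    (hpq : p ≠ q) (hpr : p ≠ r) (hqr : q ≠ r) :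
    #(privateNeighbors edge t e₀ q) + #(privateNeighbors edge t e₀ r) ≤
      #(privateNeighbors edge t e₀ p) := by
  rw [← card_union_of_disjoint (disjoint_privateNeighbors hq hqr)]
  have hsource : ∀ x ∈ privateNeighbors edge t e₀ q ∪ privateNeighbors edge t e₀ r,
      x ∉ outerNeighbors edge t e₀ p ∧
        ∃ s ∈ edge e₀, p ≠ s ∧ x ∈ outerNeighbors edge t e₀ s := fun x hx => by
    rcases mem_union.1 hx with hx | hx <;> obtain ⟨hxs, hx⟩ := mem_privateNeighbors.1 hx
    exacts [⟨hx p hp hpq, q, hq, hpq, hxs⟩, ⟨hx p hp hpr, r, hr, hpr, hxs⟩]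
  have houter : ∀ x ∈ privateNeighbors edge t e₀ q ∪ privateNeighbors edge t e₀ r,
      x ∉ edge e₀ := fun x hx => by
    obtain ⟨-, s, -, -, hxs⟩ := hsource x hx
    exact (mem_outerNeighbors.1 hxs).1
  have : Nonempty I := ⟨e₀⟩
  choose! g hg hpg hxg htg using fun x hx =>
    h.exists_privateNeighbor hcover ht hp (houter x hx) (hsource x hx).1
  refine card_le_card_of_injOn (fun x => t (g x)) htg fun x hx y hy hxy => ?_
  obtain ⟨-, s, hs, hps, hxs⟩ := hsource x hx
  exact h.eq_of_token_eq hcover.card_edge ht hp hs hps hxs (houter y hy) (hg x hx) (hg y hy)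
    (hpg x hx) (hxg x hx) (hpg y hy) (hxg y hy) hxy
    (mem_outerNeighbors.1 (mem_privateNeighbors.1 (htg x hx)).1).1

lemma exists_notMem_outerNeighbors (h : HasNoBypass edge t e₀) (hcard : ∀ i, #(edge i) = 3)
    (ht : IsTokenChoice edge t) (hx : x ∉ edge e₀) :
    ∃ p ∈ edge e₀, x ∉ outerNeighbors edge t e₀ p := by
  by_contra! hall
  have : Nonempty I := ⟨e₀⟩
  choose! g hge hswap using fun p hp => (mem_outerNeighbors.1 (hall p hp)).2
  obtain ⟨p, hp⟩ := card_pos.1 ((hcard e₀).symm ▸ three_pos)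
  have hsub : insert x (edge e₀) ⊆ edge (g p) := insert_subset ((hswap p hp).mem_right ht)
    fun q hq => by
      rcases eq_or_ne p q with rfl | hpq
      · exact (hswap p hp).mem_left ht
      · rw [h.eq_of_swaps_of_swaps hp hq hpq (hge p hp) (hge q hq) (hswap p hp) (hswap q hq)]
        exact (hswap q hq).mem_left ht
  have hle := card_le_card hsub
  simp [card_insert_of_notMem hx, hcard] at hle

end HasNoBypass

-- Without a bypass, mapping `x` to the token of an edge through `p` and `x` shows that each vertex
-- of `e₀` has at least as many private neighbours as the other two together, so there are none.
lemma not_hasNoBypass (hcover : IsTripleCover edge) (ht : IsTokenChoice edge t)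
    (hV : 4 ≤ Fintype.card V) (e₀ : I) : ¬ HasNoBypass edge t e₀ := by
  intro h
  have hempty : ∀ p ∈ edge e₀, #(privateNeighbors edge t e₀ p) = 0 := by
    obtain ⟨p, q, r, hpq, hpr, hqr, he₀⟩ := card_eq_three.1 (hcover.card_edge e₀)
    have hp : p ∈ edge e₀ := by simp [he₀]
    have hq : q ∈ edge e₀ := by simp [he₀]
    have hr : r ∈ edge e₀ := by simp [he₀]
    have h₁ := h.card_privateNeighbors_add_le hcover ht hp hq hr hpq hpr hqr
    have h₂ := h.card_privateNeighbors_add_le hcover ht hq hp hr hpq.symm hqr hpr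
    have h₃ := h.card_privateNeighbors_add_le hcover ht hr hp hq hpr.symm hqr.symm hpq
    simp only [he₀, mem_insert, mem_singleton, forall_eq_or_imp, forall_eq]
    omega
  obtain ⟨x, hx⟩ : ∃ x, x ∉ edge e₀ := by
    by_contra! hall
    have := hcover.card_edge e₀
    rw [eq_univ_of_forall hall, card_univ] at this
    omega
  obtain ⟨p, hp, hxp⟩ := h.exists_notMem_outerNeighbors hcover.card_edge ht hx
  obtain ⟨g, -, -, -, htg⟩ := h.exists_privateNeighbor hcover ht hp hx hxp
  exact (card_pos.2 ⟨_, htg⟩).ne' (hempty p hp)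

lemma exists_trail_swaps (hcover : IsTripleCover edge) (ht : IsTokenChoice edge t)
    (hV : 4 ≤ Fintype.card V) (hxy : x ≠ y) : ∃ T, Trail (Swaps edge t) T x y := by
  obtain ⟨e₀, hx, hy⟩ := hcover.exists_edge hxy
  rcases swaps_or_mem_link hxy hx hy with hswap | ⟨hxL, hyL⟩
  · exact ⟨_, .single hswap⟩
  have hbypass := not_hasNoBypass hcover ht hV e₀
  simp only [HasNoBypass, not_forall] at hbypass
  obtain ⟨T, a, b, htrail, ha, hb, hab, he₀⟩ := hbypass
  have hsymm := htrail.symm fun _ _ _ h => h.symm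
  have hmem : ∀ c ∈ edge e₀, c = x ∨ c = y ∨ c = t e₀ := fun c hc => by
    by_contra! hne
    exact (card_link hcover.card_edge ht e₀).not_gt <| two_lt_card.2 ⟨x, hxL, y, hyL, c,
      mem_link.2 ⟨hne.2.2, hc⟩, hxy, hne.1.symm, hne.2.1.symm⟩
  rcases hmem a ha with rfl | rfl | rfl <;> rcases hmem b hb with rfl | rfl | rfl
  all_goals first
    | exact absurd rfl hab
    | exact ⟨T, htrail⟩
    | exact ⟨T, hsymm⟩
    | exact ⟨_, htrail.concat he₀ (.inr ⟨hyL, rfl⟩)⟩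
    | exact ⟨_, hsymm.concat he₀ (.inr ⟨hyL, rfl⟩)⟩
    | exact ⟨_, .cons he₀ (.inl ⟨hxL, rfl⟩) htrail⟩
    | exact ⟨_, .cons he₀ (.inl ⟨hxL, rfl⟩) hsymm⟩

end Bypass

section EvenLinks

variable [Fintype V] [Fintype I]

lemma exists_card_odd_degree_lt (hcover : IsTripleCover edge) (ht : IsTokenChoice edge t)
    (hV : 4 ≤ Fintype.card V) (hodd : ¬ IsEven (link edge t)) :
    ∃ t', IsTokenChoice edge t' ∧
      #{v | Odd (degree (link edge t') v)} < #{v | Odd (degree (link edge t) v)} := by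
  classical
  have hpos : 0 < #{v | Odd (degree (link edge t) v)} := by
    rw [card_pos]
    simpa [IsEven, filter_nonempty_iff] using hodd
  have htwo : 1 < #{v | Odd (degree (link edge t) v)} := by
    have := even_card_odd_degree (card_link hcover.card_edge ht)
    grind
  obtain ⟨a, ha, b, hb, hab⟩ := one_lt_card.1 htwo
  obtain ⟨T, htrail⟩ := exists_trail_swaps hcover ht hV hab
  obtain ⟨t', ht', hoff, -, hflips⟩ := exists_flips ht htrail
  have hodd' : ∀ v, Odd (degree (link edge t') v) → v ≠ a ∧ Odd (degree (link edge t) v) :=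
    fun v hv => by
      have hdeg := natCast_degree_link_of_flips ht ht' hoff hflips v
      rw [mem_filter_univ] at ha hb
      rw [← ZMod.natCast_eq_one_iff_odd] at ha hb hv ⊢
      rcases eq_or_ne v a with rfl | hva
      · simp [hab, ha, hv, CharTwo.add_self_eq_zero] at hdeg
      · rcases eq_or_ne v b with rfl | hvb
        · exact ⟨hva, hb⟩
        · exact ⟨hva, by simpa [hva, hvb, hv] using hdeg.symm⟩
  refine ⟨t', ht', card_lt_card <| (ssubset_iff_of_subset fun v hv => ?_).2 ⟨a, ha, fun h => ?_⟩⟩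
  · rw [mem_filter_univ] at hv ⊢
    exact (hodd' v hv).2
  · exact (hodd' a ((mem_filter_univ a).1 h)).1 rfl

theorem exists_isEven_link (hcover : IsTripleCover edge) (hV : 4 ≤ Fintype.card V) :
    ∃ t, IsTokenChoice edge t ∧ IsEven (link edge t) := by
  classical
  have hnonempty : ∀ i, (edge i).Nonempty := fun i =>
    card_pos.1 (hcover.card_edge i ▸ three_pos)
  choose t₀ ht₀ using hnonempty
  obtain ⟨t, ht, hmin⟩ := exists_min_image {t | IsTokenChoice edge t}
    (fun t => #{v | Odd (degree (link edge t) v)}) ⟨t₀, (mem_filter_univ t₀).2 ht₀⟩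
  rw [mem_filter_univ] at ht
  by_contra! hodd
  obtain ⟨t', ht', hlt⟩ := exists_card_odd_degree_lt hcover ht hV (hodd t ht)
  exact (hmin t' ((mem_filter_univ t').2 ht')).not_gt hlt

end EvenLinks

section MaximalComponent

lemma exists_mem_link_inter (hcard : ∀ i, #(edge i) = 3) (ht : IsTokenChoice edge t)
    (ht' : IsTokenChoice edge t') (i : I) : ∃ x ∈ link edge t i, x ∈ link edge t' i := by
  rw [← not_disjoint_iff]
  intro hdisj
  have hle : #(link edge t i ∪ link edge t' i) ≤ #(edge i) :=
    card_le_card (union_subset (erase_subset ..) (erase_subset ..))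
  rw [card_union_of_disjoint hdisj, card_link hcard ht, card_link hcard ht', hcard] at hle
  omega

variable [Fintype I]

/-- The edges of the multigraph `L` that have an end in `X`. -/
def incident (L : I → Finset V) (X : Finset V) : Finset I := {i | ¬ Disjoint (L i) X}

lemma mem_incident {L : I → Finset V} {X : Finset V} :
    i ∈ incident L X ↔ ∃ x ∈ L i, x ∈ X := by
  simp [incident, not_disjoint_iff]

variable [Fintype V] {C : Finset V} {g h m : I} {u v : V}

/-- `t` is a token choice with even links and `C` is a component of its link multigraph; among all
such pairs, `C` has the largest number of edges. -/
structure IsMaximal (edge : I → Finset V) (t : I → V) (C : Finset V) : Prop where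
  cover : IsTripleCover edge
  tokens : IsTokenChoice edge t
  even : IsEven (link edge t)
  isComponent : ∃ r, C = component (link edge t) r
  card_incident_le : ∀ t' r, IsTokenChoice edge t' → IsEven (link edge t') →
    #(incident (link edge t') (component (link edge t') r)) ≤ #(incident (link edge t) C)

lemma exists_isMaximal (hcover : IsTripleCover edge) (hV : 4 ≤ Fintype.card V) :
    ∃ t C, IsMaximal edge t C := by
  classical
  obtain ⟨t₀, ht₀, heven₀⟩ := exists_isEven_link hcover hV
  obtain ⟨r₀⟩ : Nonempty V := Fintype.card_pos_iff.1 (by omega)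
  obtain ⟨⟨t, r⟩, htr, hmax⟩ := exists_max_image
    {p : (I → V) × V | IsTokenChoice edge p.1 ∧ IsEven (link edge p.1)}
    (fun p => #(incident (link edge p.1) (component (link edge p.1) p.2)))
    ⟨(t₀, r₀), (mem_filter_univ _).2 ⟨ht₀, heven₀⟩⟩
  obtain ⟨ht, heven⟩ := (mem_filter_univ _).1 htr
  exact ⟨t, _, hcover, ht, heven, ⟨r, rfl⟩, fun t' r' ht' heven' =>
    hmax (t', r') ((mem_filter_univ _).2 ⟨ht', heven'⟩)⟩

namespace IsMaximal

lemma card_link (hC : IsMaximal edge t C) (i : I) : #(link edge t i) = 2 :=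
  CoveringTriples.card_link hC.cover.card_edge hC.tokens i

lemma mem_of_mem_link (hC : IsMaximal edge t C) (ha : a ∈ link edge t i) (hb : b ∈ link edge t i)
    (haC : a ∈ C) : b ∈ C := by
  obtain ⟨r, rfl⟩ := hC.isComponent
  exact mem_component_of_mem ha hb haC

lemma subset_of_saturated (hC : IsMaximal edge t C) {X : Finset V}
    (hX : Saturated (link edge t) X) (hx : x ∈ C) (hxX : x ∈ X) : C ⊆ X := by
  obtain ⟨r, rfl⟩ := hC.isComponent
  exact component_subset_of_mem hX hx hxX

lemma notMem_incident (hC : IsMaximal edge t C) (hv : v ∈ link edge t i) (hvC : v ∉ C) :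
    i ∉ incident (link edge t) C := fun hi => by
  obtain ⟨x, hx, hxC⟩ := mem_incident.1 hi
  exact hvC (hC.mem_of_mem_link hx hv hxC)

lemma mem_of_mem_incident (hC : IsMaximal edge t C) (ht' : IsTokenChoice edge t')
    (heven' : IsEven (link edge t')) {r : V}
    (hsub : incident (link edge t) C ⊆ incident (link edge t') (component (link edge t') r))
    (hi : i ∈ incident (link edge t') (component (link edge t') r)) :
    i ∈ incident (link edge t) C := by
  rwa [eq_of_subset_of_card_le hsub (hC.card_incident_le t' r ht' heven')]

-- Otherwise `C` would be contained in the component of `r` for `t'`, which has also the edge `i`.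
lemma mem_of_saturated_inter (hC : IsMaximal edge t C) (ht' : IsTokenChoice edge t')
    (heven' : IsEven (link edge t')) {r : V}
    (hsat : Saturated (link edge t) (C ∩ component (link edge t') r)) (hti : t i ∈ C)
    (hne : t i ≠ t' i) (hr : t i ∈ component (link edge t') r) (hv : v ∈ link edge t i) :
    v ∈ C := by
  by_contra hvC
  have hsub : C ⊆ component (link edge t') r :=
    (hC.subset_of_saturated hsat hti (mem_inter.2 ⟨hti, hr⟩)).trans inter_subset_right
  refine hC.notMem_incident hv hvC (hC.mem_of_mem_incident ht' heven' (fun k hk => ?_)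
    (mem_incident.2 ⟨t i, token_mem_link hC.tokens hne, hr⟩))
  obtain ⟨a, ha, haC⟩ := mem_incident.1 hk
  obtain ⟨b, hb, hb'⟩ := exists_mem_link_inter hC.cover.card_edge hC.tokens ht' k
  exact mem_incident.2 ⟨b, hb', hsub (hC.mem_of_mem_link ha hb haC)⟩

lemma respects_inter_component (hC : IsMaximal edge t C) (r : V)
    (hk : k ∈ incident (link edge t) C → t' k = t k) :
    Respects (C ∩ component (link edge t') r) (link edge t k) := fun a ha b hb hab => by
  obtain ⟨haC, har⟩ := mem_inter.1 hab
  have hlink : link edge t' k = link edge t k := link_congr (hk (mem_incident.2 ⟨a, ha, haC⟩))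
  exact mem_inter.2
    ⟨hC.mem_of_mem_link ha hb haC, mem_component_of_mem (hlink ▸ ha) (hlink ▸ hb) har⟩

lemma exists_swaps (hC : IsMaximal edge t C) (hu : u ∈ C) (hv : v ∉ C) :
    ∃ i, Swaps edge t i u v := by
  obtain ⟨i, hui, hvi⟩ := hC.cover.exists_edge (ne_of_mem_of_not_mem hu hv)
  exact ⟨i, (swaps_or_mem_link (ne_of_mem_of_not_mem hu hv) hui hvi).resolve_right
    fun h => hv (hC.mem_of_mem_link h.1 h.2 hu)⟩

-- Flipping the tokens along the trail would let `C` absorb the edge `j`: at most one edge of `C`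
-- changes, and by parity a single edge cannot cut `C`.
lemma mem_of_closed_trail [DecidableEq I] (hC : IsMaximal edge t C) {T : Finset I}
    (htrail : Trail (Swaps edge t) T a a) (i₀ : I)
    (hT : ∀ i ∈ T, i ∈ incident (link edge t) C → i = i₀) (hj : j ∈ T) (htj : t j ∈ C)
    (hv : v ∈ link edge t j) : v ∈ C := by
  obtain ⟨t', ht', hoff, hon, hflips⟩ := exists_flips hC.tokens htrail
  have hsat : Saturated (link edge t) (C ∩ component (link edge t') (t j)) :=
    saturated_of_respects_of_ne hC.card_link hC.even fun k hk =>
      hC.respects_inter_component (t j) fun hkC => hoff k fun hkT => hk (hT k hkT hkC)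
  exact hC.mem_of_saturated_inter ht' (isEven_link_of_flips hC.tokens ht' hoff hflips hC.even)
    hsat htj (hon j hj).symm (mem_component_self _ _) hv

lemma notMem_link_of_token_mem_link (hC : IsMaximal edge t C) (hi : t i ∉ C) (hj : t j ∈ C)
    (hji : t j ∈ link edge t i) : t i ∉ link edge t j := fun hij => by
  classical
  have hne : i ≠ j := fun h => hi (h ▸ hj)
  refine hi (hC.mem_of_closed_trail (T := {i, j}) (a := t j) (.pair hne (.inl ⟨hji, rfl⟩)
    (.inl ⟨hij, rfl⟩)) i (fun k hk hkC => ?_) (by simp) hj hij)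
  rcases mem_insert.1 hk with rfl | hk
  · rfl
  · exact absurd hkC (mem_singleton.1 hk ▸ hC.notMem_incident hij hi)

lemma eq_of_token_eq (hC : IsMaximal edge t C) (hv : v ∉ C) (hvi : v ∈ link edge t i)
    (hvj : v ∈ link edge t j) (hij : t i = t j) (hi : t i ∈ C) : i = j := by
  classical
  by_contra hne
  refine hv (hC.mem_of_closed_trail (T := {i, j}) (a := v) (.pair hne (.inl ⟨hvi, rfl⟩)
    (.inr ⟨hvj, hij.symm⟩)) i (fun k hk hkC => ?_) (mem_insert_self ..) hi hvi)
  rcases mem_insert.1 hk with rfl | hk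
  · rfl
  · exact absurd hkC (mem_singleton.1 hk ▸ hC.notMem_incident hvj hv)

lemma exists_mem_link_ne (hC : IsMaximal edge t C) (i : I) (x : V) :
    ∃ a ∈ link edge t i, a ≠ x :=
  exists_mem_ne (by simp [hC.card_link]) x

lemma notMem_incident_of_swaps (hC : IsMaximal edge t C) (h : Swaps edge t g v w) (hv : v ∉ C)
    (hw : w ∉ C) : g ∉ incident (link edge t) C := by
  rcases h with h | h
  exacts [hC.notMem_incident h.1 hv, hC.notMem_incident h.1 hw]

lemma erase_subset_component (hC : IsMaximal edge t C)
    (hcut : C.erase u ⊆ component (deleteVertex (link edge t) u) x)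
    (hmove : ∀ k ∈ incident (link edge t) C, u ∉ link edge t k → t' k = t k) (haC : a ∈ C)
    (hau : a ≠ u) (ha : a ∈ component (link edge t') y) :
    C.erase u ⊆ component (link edge t') y := by
  have hsat : Saturated (deleteVertex (link edge t) u) (C ∩ component (link edge t') y) :=
    saturated_deleteVertex.2 fun k hk => hC.respects_inter_component y fun hkC => hmove k hkC hk
  exact (hcut.trans (component_subset_of_mem hsat (hcut (mem_erase.2 ⟨hau, haC⟩))
    (mem_inter.2 ⟨haC, ha⟩))).trans inter_subset_right

lemma incident_subset_of_erase_subset (hC : IsMaximal edge t C) {X : Finset V}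
    (hsub : C.erase u ⊆ X)
    (hmove : ∀ k ∈ incident (link edge t) C, u ∉ link edge t k → t' k = t k)
    (htarget : ∀ k ∈ incident (link edge t) C, u ∈ link edge t k → t' k = t k ∨ t' k = u) :
    incident (link edge t) C ⊆ incident (link edge t') X := fun k hk => by
  obtain ⟨a, ha, haC⟩ := mem_incident.1 hk
  obtain ⟨b, hb, hbu⟩ := hC.exists_mem_link_ne k u
  have hbt' : b ≠ t' k := by grind [mem_link]
  exact mem_incident.2 ⟨b, mem_link_of_ne hb hbt',
    hsub (mem_erase.2 ⟨hbu, hC.mem_of_mem_link ha hb haC⟩)⟩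

-- Move the tokens of `i` and `j` to `u` and the token of `g` between the old two: the rest of `C`
-- stays connected because `u` is not a cut vertex, and it absorbs `g`.
lemma not_swaps_of_nonCutVertex (hC : IsMaximal edge t C) (hu : u ∈ C)
    (hcut : C.erase u ⊆ component (deleteVertex (link edge t) u) x) (hij : i ≠ j)
    (hui : u ∈ link edge t i) (huj : u ∈ link edge t j) (hi : t i ∉ C) (hj : t j ∉ C) :
    ¬ Swaps edge t g (t i) (t j) := fun hg => by
  classical
  have hgC : g ∉ incident (link edge t) C := hC.notMem_incident_of_swaps hg hi hj
  have hgi : g ≠ i := fun h => hgC (mem_incident.2 ⟨u, h ▸ hui, hu⟩)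
  have hgj : g ≠ j := fun h => hgC (mem_incident.2 ⟨u, h ▸ huj, hu⟩)
  obtain ⟨s, hs, hsg, hflip⟩ := hg.exists_flip
  obtain ⟨t', ht', heven', hi', hg', hj', hoff⟩ := exists_isEven_link_of_triple hC.tokens hC.even
    hgi.symm hij hgj (mem_link.1 hui).2 hs (mem_link.1 huj).2 (.inr ⟨rfl, rfl⟩) hflip
    (.inl ⟨rfl, rfl⟩)
  have hmove : ∀ k ∈ incident (link edge t) C, u ∉ link edge t k → t' k = t k := by grind
  obtain ⟨a, ha, hau⟩ := hC.exists_mem_link_ne i u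
  obtain ⟨b, hb, hbu⟩ := hC.exists_mem_link_ne j u
  set X := component (link edge t') (t i)
  have hti : t i ∈ link edge t' i := token_mem_link hC.tokens (hi' ▸ (mem_link.1 hui).1.symm)
  have htj : t j ∈ link edge t' j := token_mem_link hC.tokens (hj' ▸ (mem_link.1 huj).1.symm)
  have hsub : C.erase u ⊆ X :=
    hC.erase_subset_component hcut hmove (hC.mem_of_mem_link hui ha hu) hau
      (mem_component_of_mem hti (mem_link_of_ne ha (hi' ▸ hau)) (mem_component_self _ _))
  have htjX : t j ∈ X := mem_component_of_mem (mem_link_of_ne hb (hj' ▸ hbu)) htj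
    (hsub (mem_erase.2 ⟨hbu, hC.mem_of_mem_link huj hb hu⟩))
  have htgX : t g ∈ X := by
    rcases hflip with h | h <;> rw [h.1]
    exacts [mem_component_self _ _, htjX]
  exact hgC (hC.mem_of_mem_incident ht' heven'
    (hC.incident_subset_of_erase_subset hsub hmove (by grind))
    (mem_incident.2 ⟨t g, token_mem_link hC.tokens (hg' ▸ hsg.symm), htgX⟩))

lemma not_swaps_of_token_mem (hC : IsMaximal edge t C) (hj : t j ∈ C) (hij : i ≠ j)
    (hi : Swaps edge t i (t j) v) (hwj : w ∈ link edge t j) (hv : v ∉ C) (hw : w ∉ C) :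
    ¬ Swaps edge t g v w := fun hg => by
  classical
  have hgC := hC.notMem_incident_of_swaps hg hv hw
  have hjC := hC.notMem_incident hwj hw
  have hgi : i ≠ g := by
    rintro rfl
    rcases hi with hi | hi
    · exact hgC (mem_incident.2 ⟨_, hi.1, hj⟩)
    · rcases hg with hg | hg <;> grind
  have hgj : g ≠ j := by
    rintro rfl
    rcases hg with hg | hg <;> grind
  refine hw (hC.mem_of_closed_trail (.triple hgi hij hgj hi hg (.inl ⟨hwj, rfl⟩)) i
    (fun k hk hkC => ?_) (j := j) (by simp) hj hwj)
  grind

lemma exists_link_of_swaps (hC : IsMaximal edge t C) (hu : u ∈ C)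
    (hcut : C.erase u ⊆ component (deleteVertex (link edge t) u) x) (hv : v ∉ C) (hw : w ∉ C)
    (hvw : v ≠ w) (hg : Swaps edge t g v w) :
    ∃ i, t i = u ∧ v ∈ link edge t i ∧ w ∈ link edge t i := by
  obtain ⟨i, hi⟩ := hC.exists_swaps hu hv
  obtain ⟨j, hj⟩ := hC.exists_swaps hu hw
  rcases eq_or_ne i j with rfl | hij
  · rcases hi with hi | hi <;> rcases hj with hj | hj <;> grind [mem_link]
  · rcases hi with ⟨hui, rfl⟩ | hi
    · rcases hj with ⟨huj, rfl⟩ | ⟨hwj, rfl⟩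
      · exact (hC.not_swaps_of_nonCutVertex hu hcut hij hui huj hv hw hg).elim
      · exact (hC.not_swaps_of_token_mem hu hij (.inl ⟨hui, rfl⟩) hwj hv hw hg).elim
    · obtain ⟨hvi, rfl⟩ := hi
      exact (hC.not_swaps_of_token_mem hu hij.symm hj hvi hw hv hg.symm).elim

lemma exists_token_eq_of_swaps (hC : IsMaximal edge t C) :
    ∃ u ∈ C, ∀ ⦃v⦄, v ∉ C → ∀ ⦃w⦄, w ∉ C → v ≠ w → ∀ ⦃g⦄, Swaps edge t g v w →
      ∃ i, t i = u ∧ v ∈ link edge t i ∧ w ∈ link edge t i := by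
  obtain ⟨r, hr⟩ := hC.isComponent
  obtain ⟨u, hu, x, hcut⟩ := exists_nonCutVertex hC.card_link r
  rw [← hr] at hu hcut
  exact ⟨u, hu, fun v hv w hw hvw g => hC.exists_link_of_swaps hu hcut hv hw hvw⟩

lemma exists_link (hC : IsMaximal edge t C) (hv : v ∉ C) (hw : w ∉ C) (hvw : v ≠ w) :
    ∃ i, v ∈ link edge t i ∧ w ∈ link edge t i := by
  obtain ⟨u, -, hu⟩ := hC.exists_token_eq_of_swaps
  obtain ⟨g, hvg, hwg⟩ := hC.cover.exists_edge hvw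
  rcases swaps_or_mem_link hvw hvg hwg with hg | hg
  · exact (hu hv hw hvw hg).imp fun _ => And.right
  · exact ⟨g, hg⟩

lemma eq_of_mem_link (hC : IsMaximal edge t C) (ha : a ∈ link edge t i) (hb : b ∈ link edge t i)
    (hc : c ∈ link edge t i) (hab : a ≠ b) (hac : a ≠ c) : b = c := by
  by_contra hbc
  exact (hC.card_link i).not_gt (two_lt_card.2 ⟨a, ha, b, hb, c, hc, hab, hac, hbc⟩)

lemma token_mem (hC : IsMaximal edge t C) (hv : v ∉ C) (hvi : v ∈ link edge t i) : t i ∈ C := by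
  by_contra hti
  obtain ⟨u, hu, hlink⟩ := hC.exists_token_eq_of_swaps
  obtain ⟨w, hwi, hwv⟩ := hC.exists_mem_link_ne i v
  have hw : w ∉ C := fun hw => hv (hC.mem_of_mem_link hwi hvi hw)
  obtain ⟨j, hj, hvj, htj⟩ := hlink hv hti (mem_link.1 hvi).1 (.inl ⟨hvi, rfl⟩)
  obtain ⟨k, hk, hwk, htk⟩ := hlink hw hti (mem_link.1 hwi).1 (.inl ⟨hwi, rfl⟩)
  obtain rfl : j = k := hC.eq_of_token_eq hti htj htk (hj.trans hk.symm) (hj ▸ hu)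
  exact hwv (hC.eq_of_mem_link htj hwk hvj (mem_link.1 hwi).1.symm (mem_link.1 hvi).1.symm)

lemma token_ne (hC : IsMaximal edge t C) (hv : v ∉ C) (hij : i ≠ j) (hvi : v ∈ link edge t i)
    (hvj : v ∈ link edge t j) : t i ≠ t j := fun h =>
  hij (hC.eq_of_token_eq hv hvi hvj h (hC.token_mem hv hvi))

lemma not_swaps_token_token (hC : IsMaximal edge t C) (hv : v ∉ C) (hij : i ≠ j)
    (hvi : v ∈ link edge t i) (hvj : v ∈ link edge t j) : ¬ Swaps edge t g (t i) (t j) :=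
  fun hg => by
  classical
  have hi := hC.token_mem hv hvi
  have hj := hC.token_mem hv hvj
  have hiC := hC.notMem_incident hvi hv
  have hjC := hC.notMem_incident hvj hv
  have hgC : g ∈ incident (link edge t) C := by
    rcases hg with hg | hg
    exacts [mem_incident.2 ⟨_, hg.1, hi⟩, mem_incident.2 ⟨_, hg.1, hj⟩]
  have hig : i ≠ g := fun h => hiC (h ▸ hgC)
  have hgj : g ≠ j := fun h => hjC (h ▸ hgC)
  refine hv (hC.mem_of_closed_trail (.triple hig hij hgj (.inl ⟨hvi, rfl⟩) hg (.inr ⟨hvj, rfl⟩)) g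
    (fun k hk hkC => ?_) (mem_insert_self ..) hi hvi)
  grind

-- Move the tokens of `g`, `i`, `h` along the closed trail `t g`, `t i`, `v`: by maximality `C` must
-- fall apart, and the part of `t i` is the wanted set.
lemma exists_separating (hC : IsMaximal edge t C) (hv : v ∉ C) (hvi : v ∈ link edge t i)
    (hig : t i ∈ link edge t g) (hxg : x ∈ link edge t g) (hxi : x ≠ t i)
    (hgC : t g ∈ C) (hgh : t g ∈ link edge t h) (hth : t h = v)
    (hah : a ∈ link edge t h) (hag : a ≠ t g) :
    ∃ S, (∀ k, k ≠ g → k ≠ h → Respects S (link edge t k)) ∧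
      t i ∈ S ∧ a ∈ S ∧ x ∉ S ∧ t g ∉ S := by
  have hti : t i ∈ C := hC.token_mem hv hvi
  have hiC : i ∉ incident (link edge t) C := hC.notMem_incident hvi hv
  obtain ⟨t', ht', heven', hg', hi', hh', hoff⟩ :=
    exists_isEven_link_of_triple hC.tokens hC.even (i := g) (j := i) (k := h)
      (fun hgi => hiC (hgi ▸ mem_incident.2 ⟨_, hig, hti⟩)) (fun hgh => hv (hth ▸ hgh ▸ hgC))
      (fun hih => hiC (hih ▸ mem_incident.2 ⟨_, hgh, hgC⟩))
      (mem_link.1 hig).2 (mem_link.1 hvi).2 (mem_link.1 hgh).2 (.inl ⟨rfl, rfl⟩) (.inl ⟨rfl, rfl⟩)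
      (.inl ⟨hth, rfl⟩)
  set X := component (link edge t') (t i)
  have htiX : t i ∈ X := mem_component_self _ _
  have hrespects : ∀ k, k ≠ g → k ≠ h → Respects (C ∩ X) (link edge t k) := fun k hkg hkh =>
    hC.respects_inter_component _ fun hkC => by grind
  have hnot : ¬ Saturated (link edge t) (C ∩ X) := fun hsat =>
    hv (hC.mem_of_saturated_inter ht' heven' hsat hti (hi' ▸ (mem_link.1 hvi).1.symm) htiX hvi)
  have hxX : x ∉ C ∩ X := fun hx => hnot <|
    saturated_of_respects_of_ne hC.card_link hC.even (i := h) fun k hkh => by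
      rcases eq_or_ne k g with rfl | hkg
      · exact respects_of_mem_iff (hC.card_link k) hig hxg hxi.symm (by simp [hti, htiX, hx])
      · exact hrespects k hkg hkh
  have hgX : t g ∉ C ∩ X := fun hg => hxX <| mem_inter.2
    ⟨hC.mem_of_mem_link hig hxg hti, mem_component_of_mem
      (token_mem_link hC.tokens (hg' ▸ (mem_link.1 hig).1.symm)) (mem_link_of_ne hxg (hg' ▸ hxi))
      (mem_inter.1 hg).2⟩
  have haX : a ∈ C ∩ X := by
    by_contra haX
    refine hnot <| saturated_of_respects_of_ne hC.card_link hC.even (i := g) fun k hkg => ?_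
    rcases eq_or_ne k h with rfl | hkh
    · exact respects_of_mem_iff (hC.card_link k) hgh hah hag.symm (iff_of_false hgX haX)
    · exact hrespects k hkg hkh
  exact ⟨C ∩ X, hrespects, mem_inter.2 ⟨hti, htiX⟩, haX, hxX, hgX⟩

lemma exists_token_notMem (hC : IsMaximal edge t C) (hv : v ∉ C) (hij : i ≠ j)
    (hvi : v ∈ link edge t i) (hvj : v ∈ link edge t j) :
    ∃ g, t i ∈ link edge t g ∧ t j ∈ link edge t g ∧ t g ∉ C := by
  have htij : t i ≠ t j := hC.token_ne hv hij hvi hvj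
  obtain ⟨g, hig, hjg⟩ := hC.cover.exists_edge htij
  replace ⟨hig, hjg⟩ := (swaps_or_mem_link htij hig hjg).resolve_left
    (hC.not_swaps_token_token hv hij hvi hvj)
  refine ⟨g, hig, hjg, fun hg => ?_⟩
  obtain ⟨h, ⟨hgh, hth⟩ | ⟨hvh, hth⟩⟩ := hC.exists_swaps hg hv
  · obtain ⟨a, hah, hag⟩ := hC.exists_mem_link_ne h (t g)
    obtain ⟨S, hS, hiS, haS, hjS, hgS⟩ :=
      hC.exists_separating hv hvi hig hjg htij.symm hg hgh hth hah hag
    obtain ⟨S', hS', hjS', haS', hiS', hgS'⟩ :=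
      hC.exists_separating hv hvj hjg hig htij hg hgh hth hah hag
    have hsat : Saturated (link edge t) (symmDiff S S') := fun k => by
      rcases eq_or_ne k g with rfl | hkg
      · exact respects_of_mem_iff (hC.card_link k) hig hjg htij (by simp [mem_symmDiff, *])
      rcases eq_or_ne k h with rfl | hkh
      · exact respects_of_mem_iff (hC.card_link k) hgh hah hag.symm (by simp [mem_symmDiff, *])
      · grind [Respects, mem_symmDiff]
    have haC := hC.mem_of_mem_link hgh hah hg
    have hsub := hC.subset_of_saturated hsat (hC.token_mem hv hvi) (by simp [mem_symmDiff, *])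
    simpa [mem_symmDiff, haS, haS'] using hsub haC
  · have hih : i ≠ h := by
      rintro rfl
      exact (mem_link.1 hig).1 hth
    exact hC.not_swaps_token_token hv hih hvi hvh (.inl ⟨hig, hth.symm⟩)

lemma eq_of_token_eq_of_token_mem_link (hC : IsMaximal edge t C) (hv : v ∉ C) (him : i ≠ m)
    (hvi : v ∈ link edge t i) (hvm : v ∈ link edge t m) (hig : t i ∈ link edge t g) (hg : t g ∉ C)
    (hgk : t g ∈ link edge t k) (hkm : t k = t m) : k = m := by
  classical
  by_contra hne
  have hti := hC.token_mem hv hvi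
  have hgC : g ∈ incident (link edge t) C := mem_incident.2 ⟨_, hig, hti⟩
  have hiC := hC.notMem_incident hvi hv
  have hmC := hC.notMem_incident hvm hv
  have hkC := hC.notMem_incident hgk hg
  have htim := hC.token_ne hv him hvi hvm
  have htrail : Trail (Swaps edge t) {i, g, k, m} v v :=
    .cons (by grind) (.inl ⟨hvi, rfl⟩) (.triple (by grind) (by grind) hne (.inl ⟨hig, rfl⟩)
      (.inl ⟨hgk, hkm⟩) (.inr ⟨hvm, rfl⟩))
  exact hv (hC.mem_of_closed_trail htrail g (by grind) (mem_insert_self ..) hti hvi)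

lemma token_mem_component (hC : IsMaximal edge t C) (hv : v ∉ C) (hvi : v ∈ link edge t i)
    (hig : t i ∈ link edge t g) (hg : t g ∉ C) (hi : t' i = v)
    (hoff : ∀ l, t g ∈ link edge t l → t' l = t l) : t i ∈ component (link edge t') (t g) := by
  obtain ⟨y, hyi, hyv⟩ := hC.exists_mem_link_ne i v
  have hgi : t g ∉ link edge t i :=
    hC.notMem_link_of_token_mem_link hg (hC.token_mem hv hvi) hig
  obtain ⟨l, hgl, hyl⟩ := hC.exists_link hg (fun hy => hv (hC.mem_of_mem_link hyi hvi hy))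
    (fun h => hgi (h ▸ hyi))
  have hl : link edge t' l = link edge t l := link_congr (hoff l hgl)
  have hy : y ∈ component (link edge t') (t g) :=
    mem_component_of_mem (hl ▸ hgl) (hl ▸ hyl) (mem_component_self _ _)
  exact mem_component_of_mem (mem_link_of_ne hyi (hi ▸ hyv))
    (token_mem_link hC.tokens (hi ▸ (mem_link.1 hvi).1.symm)) hy

-- Otherwise move the tokens of `i`, `g`, `k`, `m` along the closed trail `v`, `t i`, `t g`, `t m`:
-- both ends of the old link of `g` lie in the new component of `t g`, so at most `k` is cut.
lemma token_mem_link_of_token_eq (hC : IsMaximal edge t C) (hv : v ∉ C) (hij : i ≠ j) (him : i ≠ m)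
    (hvi : v ∈ link edge t i) (hvj : v ∈ link edge t j) (hvm : v ∈ link edge t m)
    (hig : t i ∈ link edge t g) (hjg : t j ∈ link edge t g) (hg : t g ∉ C) (hgk : g ≠ k)
    (hmk : t m ∈ link edge t k) (hkg : t k = t g) : t g ∈ link edge t m := by
  by_contra hgm
  have hti := hC.token_mem hv hvi
  have htj := hC.token_mem hv hvj
  have hiC := hC.notMem_incident hvi hv
  have hmC := hC.notMem_incident hvm hv
  have hgC : g ∈ incident (link edge t) C := mem_incident.2 ⟨_, hig, hti⟩
  have hkC : k ∈ incident (link edge t) C := mem_incident.2 ⟨_, hmk, hC.token_mem hv hvm⟩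
  obtain ⟨t', ht', heven', hi', hg', -, -, hoff⟩ :=
    exists_isEven_link_of_quadruple hC.tokens hC.even (i := i) (j := g) (k := k) (l := m)
      (by grind) (by grind) him hgk (by grind) (by grind) (mem_link.1 hvi).2 (mem_link.1 hig).2
      (mem_link.1 hmk).2 (mem_link.1 hvm).2 (.inr ⟨rfl, rfl⟩) (.inr ⟨rfl, rfl⟩) (.inl ⟨hkg, rfl⟩)
      (.inl ⟨rfl, rfl⟩)
  set X := component (link edge t') (t g)
  have htiX : t i ∈ X := hC.token_mem_component hv hvi hig hg hi' fun l hl => by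
    have hlC := hC.notMem_incident hl hg
    have hgi : t g ∉ link edge t i := hC.notMem_link_of_token_mem_link hg hti hig
    grind
  have hne : t i ≠ t j := hC.token_ne hv hij hvi hvj
  have htjX : t j ∈ X := mem_component_of_mem
    (token_mem_link hC.tokens (hg' ▸ (mem_link.1 hig).1.symm))
    (mem_link_of_ne hjg (hg' ▸ hne.symm)) (mem_component_self _ _)
  have hsat : Saturated (link edge t) (C ∩ X) :=
    saturated_of_respects_of_ne hC.card_link hC.even (i := k) fun l hlk => by
      rcases eq_or_ne l g with rfl | hlg
      · exact respects_of_mem_iff (hC.card_link l) hig hjg hne (by simp [*])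
      · exact hC.respects_inter_component _ fun hlC => by grind
  exact hv (hC.mem_of_saturated_inter ht' heven' hsat hti (hi' ▸ (mem_link.1 hvi).1.symm) htiX hvi)

lemma token_mem_link_of_three_mem_link (hC : IsMaximal edge t C) (hv : v ∉ C) (hij : i ≠ j)
    (him : i ≠ m) (hjm : j ≠ m) (hvi : v ∈ link edge t i) (hvj : v ∈ link edge t j)
    (hvm : v ∈ link edge t m) (hig : t i ∈ link edge t g) (hjg : t j ∈ link edge t g)
    (hg : t g ∉ C) : t g ∈ link edge t m := by
  obtain ⟨k, ⟨hmk, hkg⟩ | ⟨hgk, hkm⟩⟩ := hC.exists_swaps (hC.token_mem hv hvm) hg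
  · have hgk : g ≠ k := by
      rintro rfl
      exact hC.token_ne hv hjm hvj hvm
        (hC.eq_of_mem_link hig hjg hmk (hC.token_ne hv hij hvi hvj) (hC.token_ne hv him hvi hvm))
    exact hC.token_mem_link_of_token_eq hv hij him hvi hvj hvm hig hjg hg hgk hmk hkg
  · exact hC.eq_of_token_eq_of_token_mem_link hv him hvi hvm hig hg hgk hkm ▸ hgk

lemma false_of_four_mem_link (hC : IsMaximal edge t C) (hv : v ∉ C) (hij : i ≠ j) (hik : i ≠ k)
    (hil : i ≠ l) (hjk : j ≠ k) (hjl : j ≠ l) (hkl : k ≠ l) (hvi : v ∈ link edge t i)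
    (hvj : v ∈ link edge t j) (hvk : v ∈ link edge t k) (hvl : v ∈ link edge t l) : False := by
  obtain ⟨g, hig, hjg, hg⟩ := hC.exists_token_notMem hv hij hvi hvj
  obtain ⟨h, hih, hkh, hh⟩ := hC.exists_token_notMem hv hik hvi hvk
  have hgk := hC.token_mem_link_of_three_mem_link hv hij hik hjk hvi hvj hvk hig hjg hg
  have hgl := hC.token_mem_link_of_three_mem_link hv hij hil hjl hvi hvj hvl hig hjg hg
  have hhl := hC.token_mem_link_of_three_mem_link hv hik hil hkl hvi hvk hvl hih hkh hh
  have hvg : v ≠ t g := fun h =>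
    hC.notMem_link_of_token_mem_link hg (hC.token_mem hv hvi) hig (h ▸ hvi)
  have hvh : v ≠ t h := fun h =>
    hC.notMem_link_of_token_mem_link hh (hC.token_mem hv hvi) hih (h ▸ hvi)
  have hgh : t g = t h := hC.eq_of_mem_link hvl hgl hhl hvg hvh
  exact hC.notMem_link_of_token_mem_link hh (hC.token_mem hv hvk) hkh (hgh ▸ hgk)

lemma link_subset (hC : IsMaximal edge t C) (i : I) : link edge t i ⊆ C := fun v hvi => by
  by_contra hv
  classical
  obtain ⟨j, hji, hvj⟩ := hC.even.exists_notMem (T := {i}) (by simpa using hvi) (by simp)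
  have hij : i ≠ j := by simpa [eq_comm] using hji
  obtain ⟨g, hig, hjg, hg⟩ := hC.exists_token_notMem hv hij hvi hvj
  have hgi := hC.notMem_link_of_token_mem_link hg (hC.token_mem hv hvi) hig
  have hgj := hC.notMem_link_of_token_mem_link hg (hC.token_mem hv hvj) hjg
  obtain ⟨k, hvk, hgk⟩ := hC.exists_link hv hg fun h => hgi (h ▸ hvi)
  have hik : i ≠ k := fun h => hgi (h ▸ hgk)
  have hjk : j ≠ k := fun h => hgj (h ▸ hgk)
  obtain ⟨l, hl, hvl⟩ := hC.even.exists_notMem (v := v) (T := {i, j, k}) (by simp [hvi, hvj, hvk])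
    (by rw [card_eq_three.2 ⟨i, j, k, hij, hik, hjk, rfl⟩]; decide)
  simp only [mem_insert, mem_singleton, not_or] at hl
  exact hC.false_of_four_mem_link hv hij hik (Ne.symm hl.1) hjk (Ne.symm hl.2.1) (Ne.symm hl.2.2)
    hvi hvj hvk hvl

end IsMaximal

lemma exists_eulerTrail_link [DecidableEq I] (hcover : IsTripleCover edge)
    (hV : 4 ≤ Fintype.card V) : ∃ t a, Trail (Connects (link edge t)) univ a a := by
  obtain ⟨t, C, hC⟩ := exists_isMaximal hcover hV
  obtain ⟨r, rfl⟩ := hC.isComponent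
  refine ⟨t, exists_eulerTrail (r := r) hC.card_link hC.even fun i => ?_⟩
  obtain ⟨x, hx⟩ : (link edge t i).Nonempty := card_pos.1 (by simp [hC.card_link i])
  exact ⟨x, hx, hC.link_subset i hx⟩

end MaximalComponent

end Tokens

section EulerTours

lemma Trail.exists_walk {V I : Type*} [DecidableEq I] {L edge : I → Finset V} {T : Finset I}
    {a b : V} (h : Trail (Connects L) T a b) (hL : ∀ i, L i ⊆ edge i) :
    ∃ (k : ℕ) (vs : Fin (k + 1) → V) (es : Fin k → Finset V), vs 0 = a ∧ vs (Fin.last k) = b ∧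
      (∀ i, vs i.castSucc ≠ vs i.succ ∧ vs i.castSucc ∈ es i ∧ vs i.succ ∈ es i) ∧
      Multiset.ofList (List.ofFn es) = T.val.map edge := by
  induction h with
  | nil a => exact ⟨0, fun _ => a, Fin.elim0, rfl, rfl, fun i => i.elim0, by simp⟩
  | @cons T i a b c hi hstep _ ih =>
    obtain ⟨k, vs, es, hfirst, hlast, hwalk, hedges⟩ := ih
    refine ⟨k + 1, Fin.cons a vs, Fin.cons (edge i) es, rfl, ?_, fun j => ?_, ?_⟩
    · rw [← Fin.succ_last, Fin.cons_succ, hlast]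
    · cases j using Fin.cases with
      | zero => simpa [hfirst] using ⟨hstep.1, hL i hstep.2.1, hL i hstep.2.2⟩
      | succ j => simpa [← Fin.succ_castSucc] using hwalk j
    · rw [insert_val_of_notMem hi, Multiset.map_cons, ← hedges, List.ofFn_succ]
      simp

variable {V : Type} {E : Multiset (Finset V)}

lemma isTripleCover_coe [DecidableEq V] (hE : IsCoveringHypergraph E 2 3) :
    IsTripleCover fun i : E => (i : Finset V) where
  card_edge i := hE.2.1 _ Multiset.coe_mem
  exists_edge x y hxy := by
    obtain ⟨f, hf, hsub⟩ := hE.2.2 {x, y} (card_pair hxy)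
    rw [← E.map_univ_coe] at hf
    obtain ⟨i, -, rfl⟩ := Multiset.mem_map.1 hf
    exact ⟨i, hsub (by simp), hsub (by simp)⟩

lemma isEulerian_of_trail [DecidableEq V] [DecidableEq E] {L : E → Finset V}
    (hL : ∀ i : E, L i ⊆ (i : Finset V)) {a : V} (h : Trail (Connects L) univ a a) :
    IsEulerian E := by
  obtain ⟨k, vs, es, hfirst, hlast, hwalk, hedges⟩ := h.exists_walk hL
  exact ⟨k, vs, es, ⟨hfirst.trans hlast.symm, hwalk⟩, hedges.trans E.map_univ_coe⟩

end EulerTours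

end CoveringTriples

open CoveringTriples in
theorem covering3Hypergraph_eulerian_of_order_ge_7_general {V : Type} [Fintype V] [DecidableEq V]
    (hord : 4 ≤ Fintype.card V) (E : Multiset (Finset V)) (hH : IsCoveringHypergraph E 2 3) :
    IsEulerian E := by
  classical
  obtain ⟨t, a, htrail⟩ := exists_eulerTrail_link (isTripleCover_coe hH) hord
  exact isEulerian_of_trail (fun i => Finset.erase_subset ..) htrail

/-- Every covering 3-hypergraph (i.e. 2-covering 3-hypergraph) of order at least 7 is
eulerian. -/
theorem covering3Hypergraph_eulerian_of_order_ge_7 {V : Type} [Fintype V] [DecidableEq V]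
    (hord : 7 ≤ Fintype.card V) (E : Multiset (Finset V))
    (hH : IsCoveringHypergraph E 2 3) :
    IsEulerian E :=
  covering3Hypergraph_eulerian_of_order_ge_7_general (by omega) E hH
end

section
/- Let k ≥ 4 and let H be a 2-covering k-hypergraph with at least two edges. Then H is quasi-eulerian. -/
/-- An Euler family: a finite collection of nontrivial closed strict trails, pairwise
anchor-disjoint (no two trails traverse a common vertex), whose traversed edges jointly
form the edge multiset `E`, so every edge is traversed exactly once and the trails are
pairwise edge-disjoint. -/
def IsEulerFamily {V : Type} (E : Multiset (Finset V)) (n : ℕ) (len : Fin n → ℕ)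
    (v : (i : Fin n) → Fin (len i + 1) → V)
    (e : (i : Fin n) → Fin (len i) → Finset V) : Prop :=
  (∀ i, 1 ≤ len i) ∧ (∀ i, IsClosedWalk (len i) (v i) (e i)) ∧
    (∀ i j, i ≠ j → ∀ a b, v i a ≠ v j b) ∧
    (∑ i, walkEdges (e i)) = E

/-- A hypergraph is quasi-eulerian if it admits an Euler family. -/
def IsQuasiEulerian {V : Type} (E : Multiset (Finset V)) : Prop :=
  ∃ n len v e, IsEulerFamily E n len v e

/-! An Euler family leaves on every edge a pair of vertices, each vertex being used an even number
of times. Conversely, given such a choice of pairs, start from the one-edge walks between the chosen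
vertices and merge walks that share an end, or closed walks that share an anchor, as long as
possible: by parity all remaining walks are closed, and they are anchor-disjoint.

Choices of pairs are encoded as perfect matchings of an auxiliary graph in which the edge `f i`
contributes its incidences together with `#(f i) - 2` dummies, so Tutte's theorem applies. In a
Tutte violator `U` of minimal size every node has neighbours in at least three odd components.
Therefore each edge is of one of three types: exactly its dummies lie in `U` (`i ∈ D`), exactly its
incidences do (`i ∈ T`), or it avoids `U`. Comparing `#U` with the number of odd components yields a
set `R` of vertices covered by the edges of `D`, with `(k - 2) * #D + 2 * #T + 2 ≤ #R ≤ k * #D`,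
such that no edge outside `D ∪ T`, and no union of two intersecting such edges, contains two points
of `R`. For `4 ≤ k`, averaging over `R` gives a point of `R` in a single edge of `D ∪ T`; since all
pairs are covered, that edge contains `R`, which forces `#D = 1` and `T = ∅`. Joining two points of
this edge to a vertex outside it gives a contradiction. -/

open Finset

section OddBarrier

variable {N : Type*} {G : SimpleGraph N} {U : Finset N} {O : Finset (Finset N)}

/-- A set `U` of nodes together with a family `O` of odd, pairwise disjoint sets of nodes, each a
union of connected components of `G - U`. When `#U < #O` it certifies that `G` has no perfect
matching; unlike the family of all odd components of `G - U`, it can be modified one set at a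
time. -/
structure IsOddBarrier (G : SimpleGraph N) (U : Finset N) (O : Finset (Finset N)) : Prop where
  odd_card {K} : K ∈ O → Odd #K
  disjoint {K} : K ∈ O → Disjoint K U
  pairwiseDisjoint : (O : Set (Finset N)).PairwiseDisjoint id
  mem_of_adj {K x y} : K ∈ O → x ∈ K → y ∉ U → G.Adj x y → y ∈ K

namespace IsOddBarrier

theorem notMem {K : Finset N} {x : N} (h : IsOddBarrier G U O) (hK : K ∈ O) (hx : x ∈ K) :
    x ∉ U :=
  Finset.disjoint_left.1 (h.disjoint hK) hx

theorem eq_of_mem {K L : Finset N} {x : N} (h : IsOddBarrier G U O) (hK : K ∈ O) (hL : L ∈ O)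
    (hxK : x ∈ K) (hxL : x ∈ L) : K = L :=
  h.pairwiseDisjoint.elim_finset hK hL x hxK hxL

theorem exists_forall_eq_of_mem (h : IsOddBarrier G U O) (x : N) :
    ∃ K, ∀ M ∈ O, x ∈ M → M = K := by
  by_cases hx : ∃ K ∈ O, x ∈ K
  · obtain ⟨K, hK, hxK⟩ := hx
    exact ⟨K, fun M hM hxM => h.eq_of_mem hM hK hxM hxK⟩
  · exact ⟨∅, fun M hM hxM => (hx ⟨M, hM, hxM⟩).elim⟩

theorem eq_of_adj {K L : Finset N} {x y : N} (h : IsOddBarrier G U O) (hK : K ∈ O) (hL : L ∈ O)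
    (hx : x ∈ K) (hy : y ∈ L) (hxy : G.Adj x y) : K = L :=
  h.eq_of_mem hK hL (h.mem_of_adj hK hx (h.notMem hL hy) hxy) hy

open Classical in
theorem erase (h : IsOddBarrier G U O) (u : N) :
    IsOddBarrier G (U.erase u) {K ∈ O | ¬∃ x ∈ K, G.Adj u x} where
  odd_card hK := h.odd_card (filter_subset _ _ hK)
  disjoint hK := (h.disjoint (filter_subset _ _ hK)).mono_right (erase_subset _ _)
  pairwiseDisjoint := h.pairwiseDisjoint.subset (filter_subset _ _)
  mem_of_adj {K x y} hK hx hy hxy := by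
    obtain ⟨hKO, hKu⟩ := mem_filter.1 hK
    have hyu : y ≠ u := fun hyu => hKu ⟨x, hx, hyu ▸ hxy.symm⟩
    exact h.mem_of_adj hKO hx (fun hyU => hy (mem_erase.2 ⟨hyu, hyU⟩)) hxy

variable [Fintype N]

theorem insert_compl [DecidableEq N] (h : IsOddBarrier G U O) (hodd : Odd #(U ∪ O.biUnion id)ᶜ) :
    IsOddBarrier G U (insert (U ∪ O.biUnion id)ᶜ O) where
  odd_card hK := by
    rcases mem_insert.1 hK with rfl | hK
    exacts [hodd, h.odd_card hK]
  disjoint hK := by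
    rcases mem_insert.1 hK with rfl | hK
    exacts [disjoint_compl_left.mono_right subset_union_left, h.disjoint hK]
  pairwiseDisjoint := by
    rw [coe_insert]
    refine h.pairwiseDisjoint.insert fun K hK _ => ?_
    exact disjoint_compl_left.mono_right
      ((subset_biUnion_of_mem id hK).trans subset_union_right)
  mem_of_adj {K x y} hK hx hy hxy := by
    rcases mem_insert.1 hK with rfl | hK
    · simp only [mem_compl, mem_union, mem_biUnion, id, not_or, not_exists, not_and] at hx ⊢
      exact ⟨hy, fun L hL hyL => hx.2 L hL (h.mem_of_adj hL hyL hx.1 hxy.symm)⟩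
    · exact h.mem_of_adj hK hx hy hxy

theorem even_card_compl_add [DecidableEq N] (h : IsOddBarrier G U O)
    (hN : Even (Fintype.card N)) : Even (#(U ∪ O.biUnion id)ᶜ + (#U + #O)) := by
  have hdisj : Disjoint U (O.biUnion id) :=
    (disjoint_biUnion_right _ _ _).2 fun K hK => (h.disjoint hK).symm
  have hcard : #(O.biUnion id) = ∑ K ∈ O, #K := card_biUnion h.pairwiseDisjoint
  have hparity : Even (∑ K ∈ O, #K + #O) := by
    rw [card_eq_sum_ones, ← sum_add_distrib]
    exact even_sum _ fun K hK => (h.odd_card hK).add_one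
  have htotal := card_compl_add_card (U ∪ O.biUnion id)
  rw [card_union_of_disjoint hdisj, hcard] at htotal
  grind

theorem exists_card_add_two_le (h : IsOddBarrier G U O) (hN : Even (Fintype.card N))
    (hlt : #U < #O) : ∃ O', IsOddBarrier G U O' ∧ #U + 2 ≤ #O' := by
  classical
  by_cases hle : #U + 2 ≤ #O
  · exact ⟨O, h, hle⟩
  have hodd : Odd #(U ∪ O.biUnion id)ᶜ := by
    have := h.even_card_compl_add hN
    grind
  have hnew : (U ∪ O.biUnion id)ᶜ ∉ O := fun hmem => by
    obtain ⟨x, hx⟩ := card_pos.1 hodd.pos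
    exact mem_compl.1 hx (mem_union_right _ (mem_biUnion.2 ⟨_, hmem, hx⟩))
  exact ⟨_, h.insert_compl hodd, by rw [card_insert_of_notMem hnew]; lia⟩

end IsOddBarrier

theorem exists_isOddBarrier_of_isTutteViolator [Finite N] {u : Set N} (hu : G.IsTutteViolator u) :
    ∃ U O, IsOddBarrier G U O ∧ #U < #O := by
  classical
  have := Fintype.ofFinite N
  let H := (⊤ : G.Subgraph).deleteVerts u
  let nodes (c : H.coe.ConnectedComponent) : Finset N := c.supp.toFinset.map (.subtype _)
  have mem_nodes {c x} :
      x ∈ nodes c ↔ ∃ hx : x ∈ H.verts, H.coe.connectedComponentMk ⟨x, hx⟩ = c := by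
    simp [nodes]
  have mem_verts {x} : x ∈ H.verts ↔ x ∉ u := by simp [H]
  have nodes_eq {c d x} (hc : x ∈ nodes c) (hd : x ∈ nodes d) : c = d := by
    obtain ⟨_, rfl⟩ := mem_nodes.1 hc
    exact (mem_nodes.1 hd).2
  have nodes_injective : Function.Injective nodes := fun c d hcd => by
    obtain ⟨x, rfl⟩ := c.exists_rep
    have hx : x.1 ∈ nodes (H.coe.connectedComponentMk x) := mem_nodes.2 ⟨x.2, rfl⟩
    exact nodes_eq hx (hcd ▸ hx)
  refine ⟨u.toFinset, H.coe.oddComponents.toFinset.image nodes, ⟨?_, ?_, ?_, ?_⟩, ?_⟩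
  · rw [Finset.forall_mem_image]
    intro c hc
    rw [card_map, ← Set.ncard_eq_toFinset_card']
    simpa using hc
  · rw [Finset.forall_mem_image]
    intro c _
    refine Finset.disjoint_left.2 fun x hx => ?_
    simpa using mem_verts.1 (mem_nodes.1 hx).1
  · simp only [coe_image]
    rintro _ ⟨c, -, rfl⟩ _ ⟨d, -, rfl⟩ hne
    exact Finset.disjoint_left.2 fun x hc hd => hne (congrArg nodes (nodes_eq hc hd))
  · intro K x y hK hx hy hxy
    obtain ⟨c, -, rfl⟩ := mem_image.1 hK
    obtain ⟨hxH, rfl⟩ := mem_nodes.1 hx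
    have hyH : y ∈ H.verts := mem_verts.2 (by simpa using hy)
    refine mem_nodes.2 ⟨hyH, SimpleGraph.ConnectedComponent.sound (SimpleGraph.Adj.reachable ?_)⟩
    simpa [H, mem_verts.1 hxH, mem_verts.1 hyH] using hxy.symm
  · rw [card_image_of_injective _ nodes_injective, ← Set.ncard_eq_toFinset_card',
      ← Set.ncard_eq_toFinset_card']
    exact hu

/-- An odd barrier which proves that `G` has no perfect matching, and in which every node of `U` has
neighbours in at least three members of `O`. -/
structure IsCriticalBarrier (G : SimpleGraph N) (U : Finset N) (O : Finset (Finset N)) : Prop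
    extends IsOddBarrier G U O where
  card_add_two_le : #U + 2 ≤ #O
  exists_adj {u} : u ∈ U → ∀ K L, ∃ M ∈ O, M ≠ K ∧ M ≠ L ∧ ∃ x ∈ M, G.Adj u x

-- A node with neighbours in at most two members of `O` can be removed from a barrier together with
-- those two members, so a barrier with `#U` minimal is critical.
theorem exists_isCriticalBarrier [Fintype N] (hN : Even (Fintype.card N))
    (hG : ¬∃ M : G.Subgraph, M.IsPerfectMatching) : ∃ U O, IsCriticalBarrier G U O := by
  classical
  have hex : ∃ n U O, #U = n ∧ IsOddBarrier G U O ∧ #U < #O := by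
    simp only [SimpleGraph.tutte, not_forall, not_not] at hG
    obtain ⟨u, hu⟩ := hG
    obtain ⟨U, O, h⟩ := exists_isOddBarrier_of_isTutteViolator hu
    exact ⟨_, U, O, rfl, h⟩
  obtain ⟨U, O₀, hU, hO₀, hlt⟩ := Nat.find_spec hex
  obtain ⟨O, hO, hle⟩ := hO₀.exists_card_add_two_le hN hlt
  refine ⟨U, O, hO, hle, fun {u} hu K L => ?_⟩
  by_contra! hfew
  have htouch : {M ∈ O | ∃ x ∈ M, G.Adj u x} ⊆ {K, L} := fun M hM => by grind
  have hlt' : #(U.erase u) < #{M ∈ O | ¬∃ x ∈ M, G.Adj u x} := by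
    have := card_filter_add_card_filter_not (s := O) (fun M => ∃ x ∈ M, G.Adj u x)
    have := (card_le_card htouch).trans card_le_two
    have := card_erase_add_one hu
    lia
  exact Nat.find_min hex (hU ▸ card_erase_lt_of_mem hu) ⟨_, _, rfl, hO.erase u, hlt'⟩

end OddBarrier

section EvenSelection

variable {ι V : Type*} {f : ι → Finset V}

/-- One can select two vertices of every edge `f i` such that each vertex is selected an even
number of times: the traces that an Euler family leaves on the edges. -/
def HasEvenSelection [Fintype ι] [DecidableEq V] (f : ι → Finset V) : Prop :=
  ∃ P : ι → Finset V, (∀ i, P i ⊆ f i ∧ #(P i) = 2) ∧ ∀ x, Even #{i | x ∈ P i}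

/-- Nodes of `selectionGraph f`: each edge `i` contributes its incidences `⟨i, inl x⟩` with
`x ∈ f i`, and `#(f i) - 2` dummies `⟨i, inr d⟩` (none if `#(f i) < 2`). -/
abbrev SelectionNode (f : ι → Finset V) : Type _ :=
  (i : ι) × (f i ⊕ Fin (#(f i) - 2))

/-- The graph whose perfect matchings encode even selections: the dummies of an edge absorb all but
two of its incidences, and the remaining incidences are paired up at their vertices. -/
def selectionGraph (f : ι → Finset V) : SimpleGraph (SelectionNode f) where
  Adj
    | ⟨i, .inl x⟩, ⟨j, .inl y⟩ => i ≠ j ∧ (x : V) = y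
    | ⟨i, .inl _⟩, ⟨j, .inr _⟩ => i = j
    | ⟨i, .inr _⟩, ⟨j, .inl _⟩ => i = j
    | ⟨_, .inr _⟩, ⟨_, .inr _⟩ => False
  symm := ⟨by
    rintro ⟨i, x | d⟩ ⟨j, y | e⟩ h
    exacts [⟨h.1.symm, h.2.symm⟩, h.symm, h.symm, h]⟩
  loopless := ⟨by
    rintro ⟨i, x | d⟩ h
    exacts [h.1 rfl, h]⟩

theorem selectionGraph_adj_inl_inr {i j : ι} {x : f i} {d : Fin (#(f j) - 2)} :
    (selectionGraph f).Adj ⟨i, .inl x⟩ ⟨j, .inr d⟩ ↔ i = j :=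
  Iff.rfl

theorem selectionGraph_adj_inr_inl {i j : ι} {d : Fin (#(f i) - 2)} {y : f j} :
    (selectionGraph f).Adj ⟨i, .inr d⟩ ⟨j, .inl y⟩ ↔ i = j :=
  Iff.rfl

theorem even_card_of_mem_of_fst_eq (hf : ∀ i, 2 ≤ #(f i)) {K : Finset (SelectionNode f)}
    (hK : ∀ i a b, ⟨i, a⟩ ∈ K → ⟨i, b⟩ ∈ K) : Even #K := by
  classical
  have hsigma : K = (K.image Sigma.fst).sigma fun _ => univ := by
    ext ⟨i, b⟩
    simp only [mem_sigma, mem_image, Sigma.exists, exists_eq_right, exists_and_right, mem_univ,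
      and_true]
    exact ⟨fun h => ⟨b, h⟩, fun ⟨a, h⟩ => hK i a b h⟩
  rw [hsigma, card_sigma]
  refine even_sum _ fun i _ => ⟨#(f i) - 1, ?_⟩
  have := hf i
  simp only [card_univ, Fintype.card_sum, Fintype.card_coe, Fintype.card_fin]
  lia

theorem even_card_selectionNode [Fintype ι] (hf : ∀ i, 2 ≤ #(f i)) :
    Even (Fintype.card (SelectionNode f)) :=
  even_card_of_mem_of_fst_eq hf (K := univ) fun _ _ _ _ => mem_univ _

theorem even_card_of_involution {α : Type*} (s : Finset α) (m : α → α) (hms : ∀ a ∈ s, m a ∈ s)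
    (hne : ∀ a ∈ s, m a ≠ a) (hm : ∀ a ∈ s, m (m a) = a) : Even #s := by
  have hsum : ∑ _a ∈ s, (1 : ZMod 2) = 0 :=
    sum_involution (fun a _ => m a) (fun _ _ => CharTwo.add_self_eq_zero 1)
      (fun a ha _ => hne a ha) hms hm
  rwa [sum_const, nsmul_one, ZMod.natCast_eq_zero_iff_even] at hsum

theorem exists_involutive_of_isPerfectMatching {N : Type*} {G : SimpleGraph N} {M : G.Subgraph}
    (hM : M.IsPerfectMatching) :
    ∃ m : N → N, Function.Involutive m ∧ ∀ x, G.Adj x (m x) := by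
  rw [SimpleGraph.Subgraph.isPerfectMatching_iff] at hM
  choose m hadj huniq using hM
  exact ⟨m, fun x => (huniq (m x) x (hadj x).symm).symm, fun x => M.adj_sub (hadj x)⟩

section Matching

variable {m : SelectionNode f → SelectionNode f}

/-- The vertices of the edge `i` whose incidence is not absorbed by a dummy of `i`, when the nodes
are matched by `m`. -/
def selectedVertices (m : SelectionNode f → SelectionNode f) (i : ι) : Finset V :=
  ({x | (m ⟨i, .inl x⟩).2.isLeft} : Finset (f i)).map (.subtype _)

theorem mem_selectedVertices {i : ι} {x : V} :
    x ∈ selectedVertices m i ↔ ∃ hx : x ∈ f i, (m ⟨i, .inl ⟨x, hx⟩⟩).2.isLeft := by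
  simp [selectedVertices]

theorem exists_apply_inr_eq (hadj : ∀ n, (selectionGraph f).Adj n (m n)) (i : ι)
    (d : Fin (#(f i) - 2)) : ∃ x : f i, m ⟨i, .inr d⟩ = ⟨i, .inl x⟩ := by
  have h := hadj ⟨i, .inr d⟩
  rcases hm : m ⟨i, .inr d⟩ with ⟨j, x | e⟩ <;> rw [hm] at h
  · obtain rfl : i = j := h
    exact ⟨x, rfl⟩
  · exact h.elim

theorem card_selectedVertices (hm : Function.Involutive m)
    (hadj : ∀ n, (selectionGraph f).Adj n (m n)) {i : ι} (hf : 2 ≤ #(f i)) :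
    #(selectedVertices m i) = 2 := by
  choose p hp using exists_apply_inr_eq hadj i
  have hpinj : Function.Injective p := fun d e hde => by
    have : m ⟨i, .inr d⟩ = m ⟨i, .inr e⟩ := by rw [hp, hp, hde]
    simpa using hm.injective this
  have habsorbed : ({x | ¬(m ⟨i, .inl x⟩).2.isLeft} : Finset (f i)) = univ.map ⟨p, hpinj⟩ := by
    ext x
    simp only [mem_filter, mem_univ, true_and, mem_map, Function.Embedding.coeFn_mk]
    constructor
    · intro hx
      have h := hadj ⟨i, .inl x⟩
      rcases hmx : m ⟨i, .inl x⟩ with ⟨j, y | d⟩ <;> rw [hmx] at h hx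
      · simp at hx
      · obtain rfl : i = j := h
        refine ⟨d, ?_⟩
        have := hm ⟨i, .inl x⟩
        rw [hmx, hp] at this
        simpa using this
    · rintro ⟨d, rfl⟩
      rw [← hp d, hm]
      simp
  have htotal := card_filter_add_card_filter_not (s := univ)
    (fun x : f i => (m ⟨i, .inl x⟩).2.isLeft)
  rw [habsorbed, card_map, card_univ, card_univ, Fintype.card_coe, Fintype.card_fin]
    at htotal
  rw [selectedVertices, card_map]
  lia

theorem even_card_mem_selectedVertices [Fintype ι] [DecidableEq V] (hm : Function.Involutive m)
    (hadj : ∀ n, (selectionGraph f).Adj n (m n)) (x : V) :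
    Even #{i | x ∈ selectedVertices m i} := by
  let mate (i : ι) : ι := if hx : x ∈ f i then (m ⟨i, .inl ⟨x, hx⟩⟩).1 else i
  have hmate {i} (hi : x ∈ selectedVertices m i) :
      i ≠ mate i ∧ ∃ (hx : x ∈ f i) (hx' : x ∈ f (mate i)),
        m ⟨i, .inl ⟨x, hx⟩⟩ = ⟨mate i, .inl ⟨x, hx'⟩⟩ := by
    obtain ⟨hx, hleft⟩ := mem_selectedVertices.1 hi
    have h := hadj ⟨i, .inl ⟨x, hx⟩⟩
    rcases hmx : m ⟨i, .inl ⟨x, hx⟩⟩ with ⟨j, ⟨y, hy⟩ | d⟩ <;> rw [hmx] at h hleft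
    · obtain ⟨hij, rfl⟩ := h
      have : mate i = j := by simp [mate, hx, hmx]
      subst this
      exact ⟨hij, hx, hy, hmx⟩
    · simp at hleft
  have hmem {i} (hi : x ∈ selectedVertices m i) : x ∈ selectedVertices m (mate i) := by
    obtain ⟨-, hx, hx', hmx⟩ := hmate hi
    exact mem_selectedVertices.2 ⟨hx', by rw [← hmx, hm]; rfl⟩
  refine even_card_of_involution _ mate ?_ ?_ ?_ <;>
    simp only [mem_filter, mem_univ, true_and] <;> intro i hi
  · exact hmem hi
  · exact (hmate hi).1.symm
  · obtain ⟨-, hx, hx', hmx⟩ := hmate hi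
    obtain ⟨-, _, _, hmx'⟩ := hmate (hmem hi)
    rw [← hmx, hm] at hmx'
    exact (congrArg Sigma.fst hmx').symm

end Matching

theorem hasEvenSelection_of_isPerfectMatching [Fintype ι] [DecidableEq V]
    (hf : ∀ i, 2 ≤ #(f i)) {M : (selectionGraph f).Subgraph} (hM : M.IsPerfectMatching) :
    HasEvenSelection f := by
  obtain ⟨m, hm, hadj⟩ := exists_involutive_of_isPerfectMatching hM
  exact ⟨selectedVertices m,
    fun i => ⟨fun _ hx => (mem_selectedVertices.1 hx).1, card_selectedVertices hm hadj (hf i)⟩,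
    even_card_mem_selectedVertices hm hadj⟩

end EvenSelection

section SelectionObstruction

/-- The imprint of a critical barrier `U` of `selectionGraph f` on the edges: `D` and `T` consist of
the edges whose dummies, respectively incidences, lie in `U`, and `R` contains one vertex for each
odd set of the barrier that meets an edge of `D`. An edge outside `D` and `T` lies within a single
connected component of the graph without `U`, and so do two such edges sharing a vertex; hence
`eq_of_mem`. -/
structure IsSelectionObstruction {ι V : Type*} (f : ι → Finset V) (D T : Finset ι) (R : Finset V) :
    Prop where
  card_le : ∑ i ∈ D, (#(f i) - 2) + 2 * #T + 2 ≤ #R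
  exists_mem {x} : x ∈ R → ∃ i ∈ D, x ∈ f i
  eq_of_mem {i j v x y} : i ∉ D → i ∉ T → j ∉ D → j ∉ T → v ∈ f i → v ∈ f j →
    x ∈ R → x ∈ f i → y ∈ R → y ∈ f j → x = y

variable {ι V : Type*} {f : ι → Finset V} {U : Finset (SelectionNode f)}
  {O : Finset (Finset (SelectionNode f))}

namespace IsOddBarrier

theorem eq_of_inl_mem (h : IsOddBarrier (selectionGraph f) U O) {K L : Finset (SelectionNode f)}
    (hK : K ∈ O) (hL : L ∈ O) {i j : ι} {x : V} {hxi : x ∈ f i} {hxj : x ∈ f j}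
    (hiK : ⟨i, .inl ⟨x, hxi⟩⟩ ∈ K) (hjL : ⟨j, .inl ⟨x, hxj⟩⟩ ∈ L) : K = L := by
  by_cases hij : i = j
  · subst hij
    exact h.eq_of_mem hK hL hiK hjL
  · exact h.eq_of_adj hK hL hiK hjL ⟨hij, rfl⟩

theorem exists_forall_eq_of_inl_mem (h : IsOddBarrier (selectionGraph f) U O) (x : V) :
    ∃ K, ∀ M ∈ O, (∃ i, ∃ hx : x ∈ f i, ⟨i, .inl ⟨x, hx⟩⟩ ∈ M) → M = K := by
  by_cases hx : ∃ K ∈ O, ∃ i, ∃ hx : x ∈ f i, ⟨i, .inl ⟨x, hx⟩⟩ ∈ K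
  · obtain ⟨K, hK, i, _, hi⟩ := hx
    exact ⟨K, fun M hM ⟨j, _, hj⟩ => h.eq_of_inl_mem hM hK hj hi⟩
  · exact ⟨∅, fun M hM hxM => (hx ⟨M, hM, hxM⟩).elim⟩

theorem mem_of_fst_eq (h : IsOddBarrier (selectionGraph f) U O) {K : Finset (SelectionNode f)}
    (hK : K ∈ O) {i : ι} (hf : 2 < #(f i)) (hi : ∀ a, ⟨i, a⟩ ∉ U) {a : f i ⊕ Fin (#(f i) - 2)}
    (ha : ⟨i, a⟩ ∈ K) (b : f i ⊕ Fin (#(f i) - 2)) : ⟨i, b⟩ ∈ K := by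
  have inr_mem {x} (hx : ⟨i, .inl x⟩ ∈ K) (d) : ⟨i, .inr d⟩ ∈ K :=
    h.mem_of_adj hK hx (hi _) (selectionGraph_adj_inl_inr.2 rfl)
  have inl_mem {d} (hd : ⟨i, .inr d⟩ ∈ K) (x) : ⟨i, .inl x⟩ ∈ K :=
    h.mem_of_adj hK hd (hi _) (selectionGraph_adj_inr_inl.2 rfl)
  obtain ⟨x₀, hx₀⟩ := card_pos.1 (by lia : 0 < #(f i))
  have d₀ : Fin (#(f i) - 2) := ⟨0, by lia⟩
  rcases a with x | d <;> rcases b with y | e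
  exacts [inl_mem (inr_mem ha d₀) y, inr_mem ha e, inl_mem ha y, inr_mem (inl_mem ha ⟨x₀, hx₀⟩) e]

end IsOddBarrier

namespace IsCriticalBarrier

theorem inr_mem (h : IsCriticalBarrier (selectionGraph f) U O) {i : ι} {d : Fin (#(f i) - 2)}
    (hd : ⟨i, .inr d⟩ ∈ U) (e : Fin (#(f i) - 2)) : ⟨i, .inr e⟩ ∈ U := by
  by_contra he
  obtain ⟨K, hK⟩ := h.exists_forall_eq_of_mem ⟨i, .inr e⟩
  obtain ⟨M, hM, hMK, -, ⟨j, y | d'⟩, hn, hadj⟩ := h.exists_adj hd K K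
  · exact hMK (hK M hM (h.mem_of_adj hM hn he hadj.symm))
  · exact hadj.elim

theorem inl_notMem (h : IsCriticalBarrier (selectionGraph f) U O) {i : ι} {d : Fin (#(f i) - 2)}
    (hd : ⟨i, .inr d⟩ ∈ U) (x : f i) : ⟨i, .inl x⟩ ∉ U := by
  intro hx
  obtain ⟨K, hK⟩ := h.exists_forall_eq_of_inl_mem x
  obtain ⟨M, hM, hMK, -, ⟨j, y | e⟩, hn, hadj⟩ := h.exists_adj hx K K
  · exact hMK (hK M hM ⟨j, hadj.2 ▸ y.2, by simpa only [hadj.2] using hn⟩)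
  · obtain rfl : i = j := hadj
    exact h.notMem hM hn (h.inr_mem hd e)

theorem inl_mem (h : IsCriticalBarrier (selectionGraph f) U O) {i : ι} {x : f i}
    (hx : ⟨i, .inl x⟩ ∈ U) (y : f i) : ⟨i, .inl y⟩ ∈ U := by
  by_contra hy
  obtain ⟨K, hK⟩ := h.exists_forall_eq_of_inl_mem x
  obtain ⟨L, hL⟩ := h.exists_forall_eq_of_mem ⟨i, .inl y⟩
  obtain ⟨M, hM, hMK, hML, ⟨j, z | d⟩, hn, hadj⟩ := h.exists_adj hx K L
  · exact hMK (hK M hM ⟨j, hadj.2 ▸ z.2, by simpa only [hadj.2] using hn⟩)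
  · exact hML (hL M hM (h.mem_of_adj hM hn hy hadj.symm))

end IsCriticalBarrier

variable [Fintype ι]

open Classical in
/-- The edges with a dummy in `U`. -/
noncomputable def dummyEdges (U : Finset (SelectionNode f)) : Finset ι :=
  {i | ∃ d, ⟨i, .inr d⟩ ∈ U}

open Classical in
/-- The edges with an incidence in `U`. -/
noncomputable def incidenceEdges (U : Finset (SelectionNode f)) : Finset ι :=
  {i | ∃ x, ⟨i, .inl x⟩ ∈ U}

open Classical in
/-- The members of `O` containing an incidence of an edge of `dummyEdges U`. -/
noncomputable def dummyParts (U : Finset (SelectionNode f))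
    (O : Finset (Finset (SelectionNode f))) : Finset (Finset (SelectionNode f)) :=
  {K ∈ O | ∃ i ∈ dummyEdges U, ∃ x, ⟨i, .inl x⟩ ∈ K}

theorem mem_dummyEdges {i : ι} : i ∈ dummyEdges U ↔ ∃ d, ⟨i, .inr d⟩ ∈ U := by
  simp [dummyEdges]

theorem mem_incidenceEdges {i : ι} : i ∈ incidenceEdges U ↔ ∃ x, ⟨i, .inl x⟩ ∈ U := by
  simp [incidenceEdges]

theorem mem_dummyParts {K : Finset (SelectionNode f)} :
    K ∈ dummyParts U O ↔ K ∈ O ∧ ∃ i ∈ dummyEdges U, ∃ x, ⟨i, .inl x⟩ ∈ K := by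
  simp [dummyParts]

theorem notMem_of_notMem_dummyEdges_of_notMem_incidenceEdges {i : ι} (hD : i ∉ dummyEdges U)
    (hT : i ∉ incidenceEdges U) (a : f i ⊕ Fin (#(f i) - 2)) : ⟨i, a⟩ ∉ U := by
  rcases a with x | d
  exacts [fun hx => hT (mem_incidenceEdges.2 ⟨x, hx⟩), fun hd => hD (mem_dummyEdges.2 ⟨d, hd⟩)]

namespace IsCriticalBarrier

theorem sum_add_sum_le_card (h : IsCriticalBarrier (selectionGraph f) U O) :
    ∑ i ∈ dummyEdges U, (#(f i) - 2) + ∑ i ∈ incidenceEdges U, #(f i) ≤ #U := by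
  classical
  let dummies : Finset (SelectionNode f) := (dummyEdges U).sigma fun _ => univ.map .inr
  let incidences : Finset (SelectionNode f) := (incidenceEdges U).sigma fun _ => univ.map .inl
  have hdisj : Disjoint dummies incidences := by
    rw [Finset.disjoint_left]
    rintro ⟨i, x | d⟩ <;> simp [dummies, incidences]
  have hsub : dummies ∪ incidences ⊆ U := by
    rintro ⟨i, x | d⟩ hn <;>
      simp only [dummies, incidences, mem_union, mem_sigma, mem_map, mem_univ, true_and,
        Function.Embedding.inl_apply, Function.Embedding.inr_apply, reduceCtorEq, exists_false,
        and_false, Sum.inl.injEq, Sum.inr.injEq, exists_eq, and_true, or_false, false_or] at hn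
    · obtain ⟨y, hy⟩ := mem_incidenceEdges.1 hn
      exact h.inl_mem hy x
    · obtain ⟨e, he⟩ := mem_dummyEdges.1 hn
      exact h.inr_mem he d
  have := card_le_card hsub
  rw [card_union_of_disjoint hdisj] at this
  simpa [dummies, incidences, card_sigma] using this

theorem exists_inr_mem_of_notMem_dummyParts (h : IsCriticalBarrier (selectionGraph f) U O)
    (hf : ∀ i, 2 < #(f i)) {K : Finset (SelectionNode f)} (hK : K ∈ O)
    (hKD : K ∉ dummyParts U O) : ∃ i ∈ incidenceEdges U, ∃ d, ⟨i, .inr d⟩ ∈ K := by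
  by_contra! hKT
  have inl_notMem {i} (hi : i ∈ dummyEdges U) (x) : ⟨i, .inl x⟩ ∉ K := fun hx =>
    hKD (mem_dummyParts.2 ⟨hK, i, hi, x, hx⟩)
  have hlive {i a} (ha : ⟨i, a⟩ ∈ K) : i ∉ dummyEdges U ∧ i ∉ incidenceEdges U := by
    rcases a with x | d <;> constructor <;> intro hi
    · exact inl_notMem hi x ha
    · obtain ⟨y, hy⟩ := mem_incidenceEdges.1 hi
      exact h.notMem hK ha (h.inl_mem hy x)
    · obtain ⟨e, he⟩ := mem_dummyEdges.1 hi
      exact h.notMem hK ha (h.inr_mem he d)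
    · exact hKT i hi d ha
  have heven : Even #K := even_card_of_mem_of_fst_eq (fun i => (hf i).le) fun i a b ha =>
    h.mem_of_fst_eq hK (hf i) (notMem_of_notMem_dummyEdges_of_notMem_incidenceEdges
      (hlive ha).1 (hlive ha).2) ha b
  exact Nat.not_even_iff_odd.2 (h.odd_card hK) heven

open Classical in
theorem card_sdiff_dummyParts_le (h : IsCriticalBarrier (selectionGraph f) U O)
    (hf : ∀ i, 2 < #(f i)) :
    #(O \ dummyParts U O) ≤ ∑ i ∈ incidenceEdges U, (#(f i) - 2) := by
  calc #(O \ dummyParts U O)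
    _ ≤ #((incidenceEdges U).sigma fun i => (univ : Finset (Fin (#(f i) - 2)))) := by
      refine card_le_card_of_forall_subsingleton
        (fun K n => (⟨n.1, .inr n.2⟩ : SelectionNode f) ∈ K) (fun K hK => ?_)
        fun n _ K hK L hL => ?_
      · obtain ⟨hKO, hKD⟩ := mem_sdiff.1 hK
        obtain ⟨i, hi, d, hd⟩ := h.exists_inr_mem_of_notMem_dummyParts hf hKO hKD
        exact ⟨⟨i, d⟩, mem_sigma.2 ⟨hi, mem_univ d⟩, hd⟩
      · exact h.eq_of_mem (mem_sdiff.1 hK.1).1 (mem_sdiff.1 hL.1).1 hK.2 hL.2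
    _ = ∑ i ∈ incidenceEdges U, (#(f i) - 2) := by simp [card_sigma]

theorem sum_add_two_le_card_dummyParts (h : IsCriticalBarrier (selectionGraph f) U O)
    (hf : ∀ i, 2 < #(f i)) :
    ∑ i ∈ dummyEdges U, (#(f i) - 2) + 2 * #(incidenceEdges U) + 2 ≤ #(dummyParts U O) := by
  classical
  have hsum : ∑ i ∈ incidenceEdges U, #(f i) =
      ∑ i ∈ incidenceEdges U, (#(f i) - 2) + 2 * #(incidenceEdges U) := by
    rw [mul_comm, ← smul_eq_mul, ← sum_const, ← sum_add_distrib]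
    exact sum_congr rfl fun i _ => (Nat.sub_add_cancel (hf i).le).symm
  have := h.sum_add_sum_le_card
  have := h.card_sdiff_dummyParts_le hf
  have := card_sdiff_add_card_eq_card (s := dummyParts U O) (t := O)
    fun K hK => (mem_dummyParts.1 hK).1
  have := h.card_add_two_le
  lia

theorem exists_isSelectionObstruction (h : IsCriticalBarrier (selectionGraph f) U O)
    (hf : ∀ i, 2 < #(f i)) :
    ∃ R, IsSelectionObstruction f (dummyEdges U) (incidenceEdges U) R := by
  classical
  have hrep (K : dummyParts U O) :
      ∃ x, ∃ i ∈ dummyEdges U, ∃ hx : x ∈ f i, ⟨i, .inl ⟨x, hx⟩⟩ ∈ K.1 := by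
    obtain ⟨i, hi, ⟨x, hx⟩, hmem⟩ := (mem_dummyParts.1 K.2).2
    exact ⟨x, i, hi, hx, hmem⟩
  have hmem_O (K : dummyParts U O) : K.1 ∈ O := (mem_dummyParts.1 K.2).1
  choose rep hrep using hrep
  have hinj : Function.Injective rep := fun K L hKL => by
    obtain ⟨i, -, hxi, hi⟩ := hrep K
    obtain ⟨j, -, hxj, hj⟩ := hrep L
    simp only [← hKL] at hj
    exact Subtype.ext (h.eq_of_inl_mem (hmem_O K) (hmem_O L) hi hj)
  have inl_mem {K j} (hjD : j ∉ dummyEdges U) (hjT : j ∉ incidenceEdges U) (hxj : rep K ∈ f j)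
      (v) : ⟨j, .inl v⟩ ∈ K.1 := by
    obtain ⟨i, hiD, hxi, hi⟩ := hrep K
    have hlive := notMem_of_notMem_dummyEdges_of_notMem_incidenceEdges hjD hjT
    have hij : i ≠ j := fun hij => hjD (hij ▸ hiD)
    have hjK : ⟨j, .inl ⟨rep K, hxj⟩⟩ ∈ K.1 := h.mem_of_adj (hmem_O K) hi (hlive _) ⟨hij, rfl⟩
    exact h.mem_of_fst_eq (hmem_O K) (hf j) hlive hjK _
  refine ⟨univ.image rep, ?_, ?_, ?_⟩
  · rw [card_image_of_injective _ hinj, card_univ, Fintype.card_coe]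
    exact h.sum_add_two_le_card_dummyParts hf
  · intro x hx
    obtain ⟨K, -, rfl⟩ := mem_image.1 hx
    obtain ⟨i, hiD, hxi, -⟩ := hrep K
    exact ⟨i, hiD, hxi⟩
  · intro i j v x y hiD hiT hjD hjT hvi hvj hx hxi hy hyj
    obtain ⟨K, -, rfl⟩ := mem_image.1 hx
    obtain ⟨L, -, rfl⟩ := mem_image.1 hy
    exact congrArg rep (Subtype.ext (h.eq_of_inl_mem (hmem_O K) (hmem_O L)
      (inl_mem hiD hiT hxi ⟨v, hvi⟩) (inl_mem hjD hjT hyj ⟨v, hvj⟩)))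

end IsCriticalBarrier

theorem exists_isSelectionObstruction_of_not_hasEvenSelection [DecidableEq V]
    (hf : ∀ i, 2 < #(f i)) (h : ¬HasEvenSelection f) : ∃ D T R, IsSelectionObstruction f D T R := by
  have hle (i) : 2 ≤ #(f i) := (hf i).le
  obtain ⟨U, O, hUO⟩ := exists_isCriticalBarrier (even_card_selectionNode hle)
    fun ⟨M, hM⟩ => h (hasEvenSelection_of_isPerfectMatching hle hM)
  exact ⟨_, _, hUO.exists_isSelectionObstruction hf⟩

end SelectionObstruction

namespace IsSelectionObstruction

variable {ι V : Type*} {f : ι → Finset V} {D T : Finset ι} {R : Finset V} {k : ℕ}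

theorem card_le_of_card_eq (h : IsSelectionObstruction f D T R) (hcard : ∀ i, #(f i) = k) :
    (k - 2) * #D + 2 * #T + 2 ≤ #R := by
  simpa only [hcard, sum_const, smul_eq_mul, mul_comm #D] using h.card_le

theorem card_le_mul (h : IsSelectionObstruction f D T R) (hcard : ∀ i, #(f i) = k) :
    #R ≤ k * #D := by
  classical
  have hsub : R ⊆ D.biUnion f := fun x hx => mem_biUnion.2 (h.exists_mem hx)
  rw [mul_comm]
  exact (card_le_card hsub).trans (card_biUnion_le_card_mul D f k fun i _ => (hcard i).le)

theorem card_lt_card (h : IsSelectionObstruction f D T R) (hcard : ∀ i, #(f i) = k) :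
    #T < #D := by
  have hlower := h.card_le_of_card_eq hcard
  have hupper : #R ≤ (k - 2 + 2) * #D :=
    (h.card_le_mul hcard).trans (Nat.mul_le_mul_right _ le_tsub_add)
  rw [add_mul] at hupper
  lia

open Classical in
theorem exists_card_filter_mem_lt_two (h : IsSelectionObstruction f D T R) (hk : 4 ≤ k)
    (hcard : ∀ i, #(f i) = k) : ∃ x ∈ R, #{i ∈ D ∪ T | x ∈ f i} < 2 := by
  by_contra! htwo
  have hlt := h.card_lt_card hcard
  have hle := h.card_le_of_card_eq hcard
  have hcount : 2 * #R ≤ k * (#D + #T) := calc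
    2 * #R = ∑ _x ∈ R, 2 := by rw [sum_const, smul_eq_mul, mul_comm]
    _ ≤ ∑ x ∈ R, #{i ∈ D ∪ T | x ∈ f i} := sum_le_sum htwo
    _ = ∑ i ∈ D ∪ T, #{x ∈ R | x ∈ f i} :=
      sum_card_bipartiteAbove_eq_sum_card_bipartiteBelow fun x i => x ∈ f i
    _ ≤ ∑ _i ∈ D ∪ T, k := sum_le_sum fun i _ =>
      (card_le_card fun x hx => (mem_filter.1 hx).2).trans (hcard i).le
    _ = k * #(D ∪ T) := by rw [sum_const, smul_eq_mul, mul_comm]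
    _ ≤ k * (#D + #T) := Nat.mul_le_mul_left k (card_union_le D T)
  obtain ⟨m, rfl⟩ := Nat.exists_eq_add_of_le' hk
  have hmul : m * #T ≤ m * #D := Nat.mul_le_mul_left m hlt.le
  rw [show m + 4 - 2 = m + 2 by lia] at hle
  linarith

theorem exists_subset (h : IsSelectionObstruction f D T R) (hk : 4 ≤ k)
    (hcard : ∀ i, #(f i) = k) (hcover : ∀ x y, x ≠ y → ∃ i, x ∈ f i ∧ y ∈ f i) :
    ∃ i ∈ D, R ⊆ f i := by
  classical
  obtain ⟨x, hx, hlt⟩ := h.exists_card_filter_mem_lt_two hk hcard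
  obtain ⟨i, hiD, hxi⟩ := h.exists_mem hx
  refine ⟨i, hiD, fun y hy => ?_⟩
  rcases eq_or_ne x y with rfl | hxy
  · exact hxi
  obtain ⟨j, hxj, hyj⟩ := hcover x y hxy
  by_cases hj : j ∈ D ∪ T
  · have : j = i := card_le_one.1 (Nat.le_of_lt_succ hlt) j (mem_filter.2 ⟨hj, hxj⟩) i
      (mem_filter.2 ⟨mem_union_left T hiD, hxi⟩)
    exact this ▸ hyj
  · rw [mem_union, not_or] at hj
    exact (hxy (h.eq_of_mem hj.1 hj.2 hj.1 hj.2 hxj hxj hx hxj hy hyj)).elim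

theorem exists_eq_singleton (h : IsSelectionObstruction f D T R) (hk : 4 ≤ k)
    (hcard : ∀ i, #(f i) = k) (hcover : ∀ x y, x ≠ y → ∃ i, x ∈ f i ∧ y ∈ f i) :
    ∃ i, D = {i} ∧ T = ∅ ∧ R = f i := by
  obtain ⟨i, hiD, hRi⟩ := h.exists_subset hk hcard hcover
  have hR : #R ≤ k := (card_le_card hRi).trans (hcard i).le
  have hle := h.card_le_of_card_eq hcard
  have hD : #D = 1 := by
    have hpos : 0 < #D := card_pos.2 ⟨i, hiD⟩
    by_contra hne
    have : (k - 2) * 2 ≤ (k - 2) * #D := Nat.mul_le_mul_left _ (by lia)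
    lia
  rw [hD, mul_one] at hle
  refine ⟨i, ?_, card_eq_zero.1 (by lia), eq_of_subset_of_card_le hRi (by rw [hcard]; lia)⟩
  obtain ⟨j, rfl⟩ := card_eq_one.1 hD
  rw [mem_singleton.1 hiD]

end IsSelectionObstruction

theorem not_isSelectionObstruction_of_cover {ι V : Type*} [Nontrivial ι] {f : ι → Finset V} {k : ℕ}
    (hk : 4 ≤ k) (hcard : ∀ i, #(f i) = k) (hcover : ∀ x y, x ≠ y → ∃ i, x ∈ f i ∧ y ∈ f i)
    (D T : Finset ι) (R : Finset V) : ¬IsSelectionObstruction f D T R := by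
  intro h
  obtain ⟨i, rfl, rfl, rfl⟩ := h.exists_eq_singleton hk hcard hcover
  have eq_of_mem {j l v x y} (hj : j ≠ i) (hl : l ≠ i) (hvj : v ∈ f j) (hvl : v ∈ f l)
      (hx : x ∈ f i) (hxj : x ∈ f j) (hy : y ∈ f i) (hyl : y ∈ f l) : x = y :=
    h.eq_of_mem (by simpa) (by simp) (by simpa) (by simp) hvj hvl hx hxj hy hyl
  obtain ⟨v, hvi⟩ : ∃ v, v ∉ f i := by
    obtain ⟨j, hji⟩ := exists_ne i
    obtain ⟨x, hx, y, hy, hxy⟩ := one_lt_card.1 (by rw [hcard]; lia : 1 < #(f j))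
    by_contra! hall
    exact hxy (eq_of_mem hji hji hx hx (hall x) hx (hall y) hy)
  have exists_block {x} (hx : x ∈ f i) : ∃ j, j ≠ i ∧ v ∈ f j ∧ x ∈ f j := by
    obtain ⟨j, hvj, hxj⟩ := hcover v x (fun hvx => hvi (hvx ▸ hx))
    exact ⟨j, fun hji => hvi (hji ▸ hvj), hvj, hxj⟩
  obtain ⟨x, hx, y, hy, hxy⟩ := one_lt_card.1 (by rw [hcard]; lia : 1 < #(f i))
  obtain ⟨j, hj, hvj, hxj⟩ := exists_block hx
  obtain ⟨l, hl, hvl, hyl⟩ := exists_block hy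
  exact hxy (eq_of_mem hj hl hvj hvl hx hxj hy hyl)

theorem hasEvenSelection_of_cover {ι V : Type*} [Fintype ι] [Nontrivial ι] [DecidableEq V]
    {f : ι → Finset V} {k : ℕ} (hk : 4 ≤ k) (hcard : ∀ i, #(f i) = k)
    (hcover : ∀ x y, x ≠ y → ∃ i, x ∈ f i ∧ y ∈ f i) : HasEvenSelection f := by
  by_contra h
  obtain ⟨D, T, R, hDTR⟩ := exists_isSelectionObstruction_of_not_hasEvenSelection
    (fun i => by rw [hcard]; lia) h
  exact not_isSelectionObstruction_of_cover hk hcard hcover D T R hDTR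

section Trails

variable {V : Type}

/-- `IsWalk u w F A`: there is a walk from `u` to `w` with multiset of traversed edges `F` and set
of anchors `A`. -/
inductive IsWalk : V → V → Multiset (Finset V) → Set V → Prop
  | nil (u : V) : IsWalk u u 0 {u}
  | cons {u v w : V} {f : Finset V} {F : Multiset (Finset V)} {A : Set V} (huv : u ≠ v)
      (hu : u ∈ f) (hv : v ∈ f) (h : IsWalk v w F A) : IsWalk u w (f ::ₘ F) (insert u A)

namespace IsWalk

variable {u v w x : V} {f : Finset V} {F F' : Multiset (Finset V)} {A A' : Set V}

theorem start_mem (h : IsWalk u w F A) : u ∈ A := by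
  cases h <;> simp

theorem single (huv : u ≠ v) (hu : u ∈ f) (hv : v ∈ f) : IsWalk u v {f} {u, v} :=
  cons huv hu hv (nil v)

theorem trans (h : IsWalk u v F A) (h' : IsWalk v w F' A') : IsWalk u w (F + F') (A ∪ A') := by
  induction h with
  | nil u => simpa [Set.insert_eq_of_mem h'.start_mem] using h'
  | cons huv hu hv _ ih => simpa [Set.insert_union] using cons huv hu hv (ih h')

theorem symm (h : IsWalk u w F A) : IsWalk w u F A := by
  induction h with
  | nil u => exact nil u
  | @cons u v w f F A huv hu hv h ih =>
    have hA : A ∪ {v, u} = insert u A := by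
      rw [Set.union_insert, Set.union_singleton, Set.insert_comm, Set.insert_eq_of_mem h.start_mem]
    simpa [hA, add_comm F] using ih.trans (single huv.symm hv hu)

theorem exists_split (h : IsWalk u w F A) (hx : x ∈ A) :
    ∃ F₁ F₂ A₁ A₂, IsWalk u x F₁ A₁ ∧ IsWalk x w F₂ A₂ ∧ F = F₁ + F₂ ∧ A = A₁ ∪ A₂ := by
  induction h with
  | nil u =>
    obtain rfl : x = u := hx
    exact ⟨0, 0, {x}, {x}, nil x, nil x, by simp, by simp⟩
  | @cons u v w f F A huv hu hv h ih =>
    rcases hx with rfl | hx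
    · exact ⟨0, f ::ₘ F, {x}, insert x A, nil x, cons huv hu hv h, by simp, by simp⟩
    · obtain ⟨F₁, F₂, A₁, A₂, h₁, h₂, rfl, rfl⟩ := ih hx
      exact ⟨f ::ₘ F₁, F₂, insert u A₁, A₂, cons huv hu hv h₁, h₂, by simp,
        by rw [Set.insert_union]⟩

theorem rotate (h : IsWalk u u F A) (hx : x ∈ A) : IsWalk x x F A := by
  obtain ⟨F₁, F₂, A₁, A₂, h₁, h₂, rfl, rfl⟩ := h.exists_split hx
  rw [add_comm, Set.union_comm]
  exact h₂.trans h₁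

theorem exists_fin (h : IsWalk u w F A) :
    ∃ (n : ℕ) (v : Fin (n + 1) → V) (e : Fin n → Finset V), v 0 = u ∧ v (Fin.last n) = w ∧
      (∀ i : Fin n, v i.castSucc ≠ v i.succ ∧ v i.castSucc ∈ e i ∧ v i.succ ∈ e i) ∧
      walkEdges e = F ∧ ∀ i, v i ∈ A := by
  induction h with
  | nil u => exact ⟨0, fun _ => u, Fin.elim0, rfl, rfl, fun i => i.elim0, by simp [walkEdges],
      by simp⟩
  | @cons u v w f F A huv hu hv _ ih =>
    obtain ⟨n, g, e, hstart, hlast, hstep, rfl, hmem⟩ := ih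
    refine ⟨n + 1, Fin.cons u g, Fin.cons f e, by simp, ?_, ?_, ?_, ?_⟩
    · rw [← Fin.succ_last, Fin.cons_succ, hlast]
    · refine Fin.cases (by simp [hstart, huv, hu, hv]) fun i => ?_
      rw [← Fin.succ_castSucc]
      simpa using hstep i
    · simp [walkEdges, List.ofFn_succ]
    · exact Fin.cases (by simp) fun i => by simpa using .inr (hmem i)

theorem exists_isClosedWalk (h : IsWalk u u F A) :
    ∃ (n : ℕ) (v : Fin (n + 1) → V) (e : Fin n → Finset V),
      IsClosedWalk n v e ∧ walkEdges e = F ∧ ∀ i, v i ∈ A := by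
  obtain ⟨n, v, e, hstart, hlast, hstep, hedges, hmem⟩ := h.exists_fin
  exact ⟨n, v, e, ⟨hstart.trans hlast.symm, hstep⟩, hedges, hmem⟩

end IsWalk

/-- A nontrivial walk, reduced to its ends, traversed edges and anchors. -/
structure WalkTrace (V : Type) where
  start : V
  finish : V
  edges : Multiset (Finset V)
  anchors : Set V
  isWalk : IsWalk start finish edges anchors
  edges_ne_zero : edges ≠ 0

namespace WalkTrace

variable [DecidableEq V] {a b : WalkTrace V}

/-- The number of ends of a walk at each vertex, modulo 2. -/
def endParity (a : WalkTrace V) : V → ZMod 2 :=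
  Pi.single a.start 1 + Pi.single a.finish 1

/-- Two walks can be merged into a single one without affecting the parities of the ends. -/
def Mergeable (a b : WalkTrace V) : Prop :=
  ∃ c : WalkTrace V, c.edges = a.edges + b.edges ∧ c.endParity = a.endParity + b.endParity

theorem Mergeable.symm (h : Mergeable a b) : Mergeable b a := by
  obtain ⟨c, hedges, hparity⟩ := h
  exact ⟨c, hedges.trans (add_comm _ _), hparity.trans (add_comm _ _)⟩

theorem endParity_eq_zero (ha : a.start = a.finish) : a.endParity = 0 := by
  ext x
  rw [endParity, ha]
  exact CharTwo.add_self_eq_zero _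

theorem mergeable_of_closed {x : V} (ha : a.start = a.finish) (hb : b.start = b.finish)
    (hxa : x ∈ a.anchors) (hxb : x ∈ b.anchors) : Mergeable a b := by
  have hwa : IsWalk a.start a.start a.edges a.anchors := ha ▸ a.isWalk
  have hwb : IsWalk b.start b.start b.edges b.anchors := hb ▸ b.isWalk
  refine ⟨⟨x, x, _, _, (hwa.rotate hxa).trans (hwb.rotate hxb), ?_⟩, rfl, ?_⟩
  · simp [a.edges_ne_zero]
  · rw [endParity_eq_zero ha, endParity_eq_zero hb, endParity_eq_zero rfl, add_zero]

theorem mergeable_of_end_eq_start (h : b.start = a.start ∨ b.finish = a.start) :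
    Mergeable a b := by
  obtain ⟨z, hwalk, hz⟩ : ∃ z, IsWalk a.start z b.edges b.anchors ∧
      b.endParity = Pi.single a.start 1 + Pi.single z 1 := by
    rcases h with h | h <;> rw [← h]
    · exact ⟨b.finish, b.isWalk, rfl⟩
    · exact ⟨b.start, b.isWalk.symm, add_comm _ _⟩
  refine ⟨⟨a.finish, z, _, _, a.isWalk.symm.trans hwalk, by simp [a.edges_ne_zero]⟩, rfl, ?_⟩
  ext x
  rw [hz]
  simp only [endParity, Pi.add_apply]
  linear_combination -CharTwo.add_self_eq_zero ((Pi.single a.start 1 : V → ZMod 2) x)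

theorem exists_pairwise_not_mergeable (l : List (WalkTrace V)) :
    ∃ l' : List (WalkTrace V), l'.Pairwise (fun a b => ¬Mergeable a b) ∧
      (l'.map edges).sum = (l.map edges).sum ∧
      (l'.map endParity).sum = (l.map endParity).sum := by
  induction hn : l.length generalizing l with
  | zero => exact ⟨l, by simp [List.length_eq_zero_iff.1 hn], rfl, rfl⟩
  | succ n ih =>
    by_cases hl : l.Pairwise fun a b => ¬Mergeable a b
    · exact ⟨l, hl, rfl, rfl⟩
    simp only [List.pairwise_iff_forall_sublist, not_forall, not_not] at hl
    obtain ⟨a, b, hab, c, hedges, hparity⟩ := hl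
    obtain ⟨r, hr⟩ := hab.exists_perm_append
    obtain ⟨l', hl', hedges', hparity'⟩ := ih (c :: r) (by have := hr.length_eq; simp_all)
    refine ⟨l', hl', ?_, ?_⟩
    · rw [hedges', (hr.map edges).sum_eq]
      simp [hedges, add_assoc]
    · rw [hparity', (hr.map endParity).sum_eq]
      simp [hparity, add_assoc]

theorem start_eq_finish_of_pairwise_not_mergeable {l : List (WalkTrace V)}
    (hl : l.Pairwise fun a b => ¬Mergeable a b) (hparity : (l.map endParity).sum = 0)
    (ha : a ∈ l) : a.start = a.finish := by
  by_contra hne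
  obtain ⟨r, hr⟩ := (List.singleton_sublist.2 ha).exists_perm_append
  have hpair : ∀ b ∈ r, ¬Mergeable a b :=
    (List.pairwise_cons.1 (hl.perm hr fun h => mt Mergeable.symm h)).1
  have hend {b} (hb : b ∈ r) : b.endParity a.start = 0 := by
    have hstart : a.start ≠ b.start := fun h => hpair b hb (mergeable_of_end_eq_start (.inl h.symm))
    have hfinish : a.start ≠ b.finish :=
      fun h => hpair b hb (mergeable_of_end_eq_start (.inr h.symm))
    simp [endParity, hstart, hfinish]
  have hself : a.endParity a.start = 1 := by simp [endParity, hne]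
  have hcoord := congrFun hparity a.start
  rw [(hr.map endParity).sum_eq, Pi.list_sum_apply] at hcoord
  rw [List.singleton_append, List.map_cons, List.map_cons, List.sum_cons, hself,
    List.sum_eq_zero (by simpa using fun b => hend)] at hcoord
  exact one_ne_zero ((add_zero 1).symm.trans hcoord)

theorem disjoint_anchors_of_not_mergeable (ha : a.start = a.finish) (hb : b.start = b.finish)
    (h : ¬Mergeable a b) : Disjoint a.anchors b.anchors :=
  Set.disjoint_left.2 fun _ hxa hxb => h (mergeable_of_closed ha hb hxa hxb)

end WalkTrace

theorem isQuasiEulerian_of_pairwise_disjoint_anchors {l : List (WalkTrace V)}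
    (hclosed : ∀ a ∈ l, a.start = a.finish)
    (hl : l.Pairwise fun a b => Disjoint a.anchors b.anchors) :
    IsQuasiEulerian (l.map WalkTrace.edges).sum := by
  have hwalk (i : Fin l.length) : ∃ (n : ℕ) (v : Fin (n + 1) → V) (e : Fin n → Finset V),
      IsClosedWalk n v e ∧ walkEdges e = (l.get i).edges ∧ ∀ j, v j ∈ (l.get i).anchors :=
    IsWalk.exists_isClosedWalk (u := (l.get i).start) <| by
      simpa only [← hclosed _ (l.get_mem i)] using (l.get i).isWalk
  choose n v e hclosedWalk hedges hanchors using hwalk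
  refine ⟨l.length, n, v, e, fun i => ?_, hclosedWalk, fun i j hij x y hxy => ?_, ?_⟩
  · by_contra! hlt
    refine (l.get i).edges_ne_zero (Multiset.card_eq_zero.1 ?_)
    rw [← hedges i, walkEdges, Multiset.coe_card, List.length_ofFn]
    lia
  · have hdisj : Disjoint (l.get i).anchors (l.get j).anchors := by
      rcases lt_or_gt_of_ne hij with h | h
      · exact List.pairwise_iff_get.1 hl i j h
      · exact (List.pairwise_iff_get.1 hl j i h).symm
    exact Set.disjoint_left.1 hdisj (hanchors i x) (hxy ▸ hanchors j y)
  · simp_rw [hedges]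
    rw [← List.sum_ofFn]
    simp

theorem HasEvenSelection.isQuasiEulerian {ι : Type*} [Fintype ι] [DecidableEq V]
    {f : ι → Finset V} (h : HasEvenSelection f) : IsQuasiEulerian (univ.val.map f) := by
  obtain ⟨P, hP, heven⟩ := h
  choose a b hab hPab using fun i => card_eq_two.1 (hP i).2
  have ha i : a i ∈ f i := (hP i).1 (by simp [hPab])
  have hb i : b i ∈ f i := (hP i).1 (by simp [hPab])
  let step (i : ι) : WalkTrace V :=
    ⟨a i, b i, {f i}, _, .single (hab i) (ha i) (hb i), Multiset.singleton_ne_zero _⟩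
  have hparity : ((univ.toList.map step).map WalkTrace.endParity).sum = 0 := by
    rw [List.map_map, sum_map_toList]
    ext x
    have hsum i : (step i).endParity x = if x ∈ P i then 1 else 0 := by
      have := hab i
      simp only [WalkTrace.endParity, step, hPab, Pi.add_apply, Pi.single_apply]
      grind
    rw [Finset.sum_apply]
    simp only [Function.comp_apply, hsum, sum_boole, Pi.zero_apply]
    exact ZMod.natCast_eq_zero_iff_even.2 (heven x)
  obtain ⟨l, hl, hedges, hparity'⟩ := WalkTrace.exists_pairwise_not_mergeable (univ.toList.map step)
  have hclosed {c} (hc : c ∈ l) : c.start = c.finish :=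
    WalkTrace.start_eq_finish_of_pairwise_not_mergeable hl (hparity'.trans hparity) hc
  have hE : (l.map WalkTrace.edges).sum = univ.val.map f := by
    rw [hedges, List.map_map, sum_map_toList, ← Multiset.sum_map_singleton (univ.val.map f),
      Multiset.map_map]
    rfl
  rw [← hE]
  refine isQuasiEulerian_of_pairwise_disjoint_anchors (fun _ => hclosed) (hl.imp_of_mem ?_)
  exact fun hc hd => WalkTrace.disjoint_anchors_of_not_mergeable (hclosed hc) (hclosed hd)

end Trails

/-- Let `k ≥ 4` and let `H` be a 2-covering `k`-hypergraph with at least two edges.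
Then `H` is quasi-eulerian. -/
theorem twoCoveringKHypergraph_quasiEulerian {V : Type} [Fintype V] [DecidableEq V]
    (k : ℕ) (hk : 4 ≤ k) (E : Multiset (Finset V))
    (hH : IsCoveringHypergraph E 2 k) (h2 : 2 ≤ Multiset.card E) :
    IsQuasiEulerian E := by
  obtain ⟨-, hcard, hcover⟩ := hH
  have : Nontrivial E := Fintype.one_lt_card_iff_nontrivial.1 (by rwa [Multiset.card_coe])
  let f (i : E) : Finset V := i.1
  have hf : HasEvenSelection f := by
    refine hasEvenSelection_of_cover hk (fun i => hcard _ Multiset.coe_mem) fun x y hxy => ?_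
    obtain ⟨g, hg, hxyg⟩ := hcover {x, y} (card_pair hxy)
    rw [← Multiset.map_univ_coe E] at hg
    obtain ⟨i, -, rfl⟩ := Multiset.mem_map.1 hg
    exact ⟨i, hxyg (by simp), hxyg (by simp)⟩
  rw [← Multiset.map_univ_coe E]
  exact hf.isQuasiEulerian
end

section
/- Let H be a hypergraph with at least two edges such that every two edges of H (counted with multiplicity) share at least two vertices, and some two distinct edges of H share at least three vertices. Then H is eulerian. -/
/-!
Order the edges as `f, …, e`, where `e` and `f` share three vertices. Since consecutive edges
share two vertices, a walk along this list can be chosen greedily, each new vertex being taken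
in the intersection of the next two edges and different from the current vertex. Such a walk
traverses all edges strictly between `f` and `e`, from some `u ∈ f` to some `w ∈ e`. A third
vertex `x ∈ e ∩ f` outside `{u, w}` closes it up: go from `x` to `u` through `f`, and from `w`
back to `x` through `e`.
-/

/-- `IsWalk u l w`: there is a walk in a hypergraph from `u` to `w` whose edges are, in order, those
of the list `l`. The intermediate vertices are left existential, so that walks can be built by
induction on the edge list. -/
inductive IsWalk_s9 {V : Type*} : V → List (Finset V) → V → Prop
  | nil (u : V) : IsWalk_s9 u [] u
  | cons {u v w : V} {e : Finset V} {l : List (Finset V)} (hne : u ≠ v) (hu : u ∈ e) (hv : v ∈ e)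
      (h : IsWalk_s9 v l w) : IsWalk_s9 u (e :: l) w

namespace IsWalk_s9

theorem concat {V : Type*} {u v w : V} {e : Finset V} {l : List (Finset V)} (h : IsWalk_s9 u l v)
    (hne : v ≠ w) (hv : v ∈ e) (hw : w ∈ e) : IsWalk_s9 u (l ++ [e]) w := by
  induction h with
  | nil => exact .cons hne hv hw (.nil w)
  | cons hne' hu hv' _ ih => exact .cons hne' hu hv' (ih hne hv)

theorem exists_vertices {V : Type*} {u w : V} {l : List (Finset V)} (h : IsWalk_s9 u l w) :
    ∃ v : Fin (l.length + 1) → V, v 0 = u ∧ v (Fin.last _) = w ∧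
      ∀ i : Fin l.length,
        v i.castSucc ≠ v i.succ ∧ v i.castSucc ∈ l.get i ∧ v i.succ ∈ l.get i := by
  induction h with
  | nil u => exact ⟨fun _ => u, rfl, rfl, fun i => i.elim0⟩
  | cons hne hu hv _ ih =>
    obtain ⟨v, rfl, hlast, hstep⟩ := ih
    exact ⟨Fin.cons _ v, rfl, hlast, Fin.cases ⟨hne, hu, hv⟩ hstep⟩

theorem isEulerian {V : Type} {u : V} {l : List (Finset V)} (h : IsWalk_s9 u l u) :
    IsEulerian (l : Multiset (Finset V)) := by
  obtain ⟨v, hfirst, hlast, hstep⟩ := h.exists_vertices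
  exact ⟨l.length, v, l.get, ⟨hfirst.trans hlast.symm, hstep⟩,
    congrArg Multiset.ofList (List.ofFn_get l)⟩

end IsWalk_s9

-- The induction prepends a step from `z` to `u` to the walk, hence the requirement `u ≠ z`.
theorem exists_isWalk_of_isChain_two_le_card_inter {V : Type*} [DecidableEq V] {e f : Finset V}
    {l : List (Finset V)} (h : (f :: (l ++ [e])).IsChain fun a b => 2 ≤ (a ∩ b).card) (z : V) :
    ∃ u ∈ f, u ≠ z ∧ ∃ w ∈ e, IsWalk_s9 u l w := by
  induction l generalizing f z with
  | nil =>
    have hfe : 2 ≤ (f ∩ e).card := (List.isChain_cons_cons.1 h).1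
    obtain ⟨u, hu, hne⟩ := Finset.exists_mem_ne hfe z
    rw [Finset.mem_inter] at hu
    exact ⟨u, hu.1, hne, u, hu.2, .nil u⟩
  | cons g l ih =>
    obtain ⟨hfg, hchain⟩ := List.isChain_cons_cons.1 h
    obtain ⟨u, hu, hne⟩ := Finset.exists_mem_ne hfg z
    rw [Finset.mem_inter] at hu
    obtain ⟨v, hv, hvu, w, hw, hwalk⟩ := ih hchain u
    exact ⟨u, hu.1, hne, w, hw, .cons hvu.symm hu.2 hv hwalk⟩

theorem isEulerian_of_isChain_two_le_card_inter {V : Type} [DecidableEq V] {e f : Finset V}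
    {l : List (Finset V)} (h : (f :: (l ++ [e])).IsChain fun a b => 2 ≤ (a ∩ b).card)
    (hef : 3 ≤ (e ∩ f).card) :
    IsEulerian (↑(f :: (l ++ [e])) : Multiset (Finset V)) := by
  obtain ⟨z, -⟩ : (e ∩ f).Nonempty := Finset.card_pos.1 (by omega)
  obtain ⟨u, hu, -, w, hw, hwalk⟩ := exists_isWalk_of_isChain_two_le_card_inter h z
  obtain ⟨x, hx, hxuw⟩ : ∃ x ∈ e ∩ f, x ∉ ({u, w} : Finset V) :=
    Finset.exists_mem_notMem_of_card_lt_card (Finset.card_le_two.trans_lt hef)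
  obtain ⟨hxe, hxf⟩ := Finset.mem_inter.1 hx
  obtain ⟨hxu, hxw⟩ : x ≠ u ∧ x ≠ w := by
    simpa only [Finset.mem_insert, Finset.mem_singleton, not_or] using hxuw
  exact (IsWalk_s9.cons hxu hxf hu (hwalk.concat hxw.symm hw hxe)).isEulerian

theorem exists_eq_coe_cons_concat_of_pair_le {α : Type*} {a b : α} {s : Multiset α}
    (h : a ::ₘ {b} ≤ s) : ∃ l : List α, s = ↑(b :: (l ++ [a])) := by
  obtain ⟨t, rfl⟩ := Multiset.le_iff_exists_add.1 h
  induction t using Quotient.inductionOn with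
  | h l =>
    exact ⟨l, Multiset.coe_eq_coe.2
      ((List.Perm.swap b a l).trans ((List.perm_append_singleton a l).symm.cons b))⟩

theorem pairwise_of_forall_pair_le {α : Type*} {r : α → α → Prop} {l : List α}
    (h : ∀ a b, a ::ₘ {b} ≤ (l : Multiset α) → r a b) : l.Pairwise r :=
  List.pairwise_iff_forall_sublist.2 fun hab => h _ _ (Multiset.coe_le.2 hab.subperm)

theorem eulerian_of_pairwise_intersections_general {V : Type} [DecidableEq V]
    (E : Multiset (Finset V))
    (hint : ∀ e f : Finset V, (e ::ₘ ({f} : Multiset (Finset V))) ≤ E →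
      2 ≤ (e ∩ f).card)
    (hbig : ∃ e f : Finset V, (e ::ₘ ({f} : Multiset (Finset V))) ≤ E ∧
      3 ≤ (e ∩ f).card) :
    IsEulerian E := by
  obtain ⟨e, f, hle, hef⟩ := hbig
  obtain ⟨l, rfl⟩ := exists_eq_coe_cons_concat_of_pair_le hle
  exact isEulerian_of_isChain_two_le_card_inter (pairwise_of_forall_pair_le hint).isChain hef

/-- Let `H` be a hypergraph with at least two edges such that every two edges (counted
with multiplicity, i.e. every sub-multiset `{e, f}` of the edge multiset) share at least
two vertices, and some two distinct edges share at least three vertices.  Then `H` is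
eulerian. -/
theorem eulerian_of_pairwise_intersections {V : Type} [Fintype V] [DecidableEq V]
    (E : Multiset (Finset V)) (h2 : 2 ≤ Multiset.card E)
    (hint : ∀ e f : Finset V, (e ::ₘ ({f} : Multiset (Finset V))) ≤ E →
      2 ≤ (e ∩ f).card)
    (hbig : ∃ e f : Finset V, (e ::ₘ ({f} : Multiset (Finset V))) ≤ E ∧
      3 ≤ (e ∩ f).card) :
    IsEulerian E :=
  eulerian_of_pairwise_intersections_general E hint hbig
end
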